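/- Let λ ∈ [1/3, 1/2), let K ⊂ ℝ² be a nonempty compact set satisfying K = F₁(K) ∪ F₂(K) ∪ F₃(K) ∪ F₄(K) for the von Koch similarity maps with parameter λ, and let Ω be the bounded connected component of ℝ² ∖ (G₁(K) ∪ G₂(K) ∪ G₃(K)), the snowflake domain. Then Ω is not a J-John domain for any J > (1/2 − λ)/λ. -/

import Mathlib

open Metric Set MeasureTheory

noncomputable section

abbrev Plane := EuclideanSpace ℝ (Fin 2)

/-- An open axis-parallel cube in `ℝ^d` with side length `s`. -/
def IsCube {d : ℕ} (Q : Set (EuclideanSpace ℝ (Fin d))) (s : ℝ) : Prop :=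
  0 < s ∧ ∃ c : Fin d → ℝ, Q = {x | ∀ i, x i ∈ Set.Ioo (c i) (c i + s)}

/-- The curve condition with exponent `p` and constant `C`: any two points of the
complement of `Ω` can be joined by a unit-speed (1-Lipschitz) curve in the complement
along which the arclength integral of `dist(·, ∂Ω)^(1-p)` is at most `C‖z₁-z₂‖^(2-p)`. -/
def CurveCondition (Ω : Set Plane) (p C : ℝ) : Prop :=
  ∀ z₁ ∈ Ωᶜ, ∀ z₂ ∈ Ωᶜ, ∃ (L : ℝ) (γ : ℝ → Plane), 0 ≤ L ∧
    LipschitzOnWith 1 γ (Set.Icc 0 L) ∧ γ 0 = z₁ ∧ γ L = z₂ ∧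
    (∀ t ∈ Set.Icc (0:ℝ) L, γ t ∈ Ωᶜ) ∧
    (∫ t in (0:ℝ)..L, Metric.infDist (γ t) (frontier Ω) ^ (1 - p)) ≤ C * ‖z₁ - z₂‖ ^ (2 - p)

/-- `Ω` is a `J`-John domain: there is a center `x₀` such that every point can be joined
to `x₀` by a unit-speed (1-Lipschitz) curve `γ` in `Ω` with `dist(γ t, ∂Ω) ≥ J·t`. -/
def IsJohnDomain (Ω : Set Plane) (J : ℝ) : Prop :=
  ∃ x₀ ∈ Ω, ∀ x ∈ Ω, ∃ (ℓ : ℝ) (γ : ℝ → Plane), 0 ≤ ℓ ∧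
    LipschitzOnWith 1 γ (Set.Icc 0 ℓ) ∧ γ 0 = x ∧ γ ℓ = x₀ ∧
    (∀ t ∈ Set.Icc (0:ℝ) ℓ, γ t ∈ Ω ∧ J * t ≤ Metric.infDist (γ t) (frontier Ω))

/-- `Ω` is a Jordan domain: a bounded domain whose boundary is a homeomorphic
image of the circle. -/
def IsJordanDomain (Ω : Set Plane) : Prop :=
  IsOpen Ω ∧ IsConnected Ω ∧ Bornology.IsBounded Ω ∧
  ∃ f : (Metric.sphere (0 : Plane) 1) → Plane,
    Continuous f ∧ Function.Injective f ∧ Set.range f = frontier Ω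

/-- `E` is weakly mean porous with parameters `(α, lam)`: there is a pairwise disjoint
collection `D` of open cubes in the complement of `E` and a `j₀` such that for every
`x ∈ E` and `j ≥ j₀`, more than half of the scales `k ∈ {1,…,j}` admit at least `lam k`
cubes of `D` of side length at least `α(2^(-k))` inside the annulus
`B(x,2^(-k)) ∖ B(x,2^(-k-1))`. -/
def WeaklyMeanPorous {d : ℕ} (E : Set (EuclideanSpace ℝ (Fin d)))
    (α : ℝ → ℝ) (lam : ℕ → ℝ) : Prop :=
  ∃ (D : Set (Set (EuclideanSpace ℝ (Fin d)))) (j₀ : ℕ), 0 < j₀ ∧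
    (∀ Q ∈ D, (∃ s, IsCube Q s) ∧ Q ⊆ Eᶜ) ∧ D.Pairwise Disjoint ∧
    ∀ x ∈ E, ∀ j : ℕ, j₀ ≤ j →
      (j : ℝ) / 2 < ({k : ℕ | k ∈ Finset.Icc 1 j ∧
        ∃ S : Finset (Set (EuclideanSpace ℝ (Fin d))), lam k ≤ S.card ∧
          ∀ Q ∈ S, Q ∈ D ∧
            Q ⊆ Metric.ball x ((2:ℝ) ^ (-(k:ℝ))) \ Metric.ball x ((2:ℝ) ^ (-(k:ℝ) - 1)) ∧
            ∃ s, α ((2:ℝ) ^ (-(k:ℝ))) ≤ s ∧ IsCube Q s}).ncard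

/-- The point `(a,b)` of the Euclidean plane. -/
def pt (a b : ℝ) : Plane := (WithLp.equiv 2 (Fin 2 → ℝ)).symm ![a, b]

/-- Rotation of the plane by angle `τ` about the origin. -/
def rot (τ : ℝ) (x : Plane) : Plane :=
  pt (Real.cos τ * x 0 - Real.sin τ * x 1) (Real.sin τ * x 0 + Real.cos τ * x 1)

/-- The angle `θ ∈ (0,π)` with `cos θ = (1/2 - l)/l`. -/
def kochAngle (l : ℝ) : ℝ := Real.arccos ((1/2 - l) / l)

/-- The similarity maps `F₁, F₂, F₃, F₄` of the von Koch curve with parameter `l`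
(here `h = √(l - 1/4)`). -/
def kochF (l : ℝ) : Fin 4 → Plane → Plane :=
  ![fun x => l • x,
    fun x => rot (kochAngle l) (l • x) + pt l 0,
    fun x => rot (-kochAngle l) (l • x) + pt (1/2) (Real.sqrt (l - 1/4)),
    fun x => l • x + pt (1 - l) 0]

/-- The placement maps `G₁, G₂, G₃` for the snowflake domain. -/
def kochG : Fin 3 → Plane → Plane :=
  ![fun x => x,
    fun x => rot (-(2 * Real.pi / 3)) x + pt 1 0,
    fun x => rot (2 * Real.pi / 3) x + pt (1/2) (-(Real.sqrt 3 / 2))]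

/-- The union of the three placed copies of the Koch curve `K`, forming the
boundary of the snowflake. -/
def snowflakeBoundary (K : Set Plane) : Set Plane :=
  kochG 0 '' K ∪ kochG 1 '' K ∪ kochG 2 '' K


/-!
The tip `P = (1/2, h)` of the Koch curve lies on the boundary of `Ω`, and the copies of the curve
that shrink to `P` from the left end at `P` and at vertices `Vₙ → P`. Inside the corner of `Ω` at
`P`, the normal to such a copy at `Vₙ`, followed as far as the symmetry axis of the snowflake, forms
together with its mirror image a crosscut that separates `P` from the rest of `Ω`. In the
coordinates of the copy, where `Vₙ` is the origin and `P` is `(1, 0)`, the left half of this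
crosscut consists of points `(0, y)` with `|y| ≤ (1/2 - l) / h`. Since `h² + (1/2 - l)² = l²`, they
are at most `(1/2 - l) / l` times as far from `Vₙ` as from `P`. A John curve starting near `P` has
to cross all of these crosscuts but those very close to `P` or to its other end, and when it crosses
one, the distance it has travelled is almost its distance to `P`.

That the crosscut ends where it should, and that `Ω` is the component of the centre, both come down
to the following: every point of the triangle spanned by the Koch curve, off the curve, can be
joined in the triangle minus the curve either to the legs, hence to infinity, or to the base, hence
to the centre. A point that can be joined to neither lies in the image of another such point under
some `Fᵢ`, so the set of these points is contained in the union of its own images and therefore in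
the attractor `K`.
-/

open scoped Topology NNReal

section General

variable {X : Type*}

theorem infDist_map_le_mul_infDist [PseudoMetricSpace X] {f : X → X} {r : ℝ≥0}
    (hf : LipschitzWith r f) {A : Set X} (hA : A.Nonempty) (hfA : MapsTo f A A) (x : X) :
    infDist (f x) A ≤ r * infDist x A := by
  rcases eq_or_lt_of_le r.coe_nonneg with hr | hr
  · obtain ⟨a, ha⟩ := hA
    rw [← hr, zero_mul]
    exact (infDist_le_dist_of_mem (hfA ha)).trans ((hf.dist_le_mul x a).trans (by simp [← hr]))
  · rw [← div_le_iff₀' hr, le_infDist hA]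
    intro a ha
    rw [div_le_iff₀' hr]
    exact (infDist_le_dist_of_mem (hfA ha)).trans (hf.dist_le_mul x a)

theorem subset_of_subset_iUnion_image [PseudoMetricSpace X] {ι : Sort*} {F : ι → X → X}
    {r : ℝ≥0} (hr : r < 1) (hF : ∀ i, LipschitzWith r (F i)) {A B : Set X}
    (hB : Bornology.IsBounded B) (hBF : B ⊆ ⋃ i, F i '' B) (hA : IsClosed A) (hne : A.Nonempty)
    (hAF : ∀ i, MapsTo (F i) A A) : B ⊆ A := by
  obtain ⟨D, hD⟩ := hB.subset_closedBall hne.some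
  have infDist_le (n : ℕ) : ∀ z ∈ B, infDist z A ≤ (r : ℝ) ^ n * D := by
    induction n with
    | zero => exact fun z hz ↦ by simpa using (infDist_le_dist_of_mem hne.some_mem).trans (hD hz)
    | succ n ih =>
      intro z hz
      obtain ⟨i, w, hw, rfl⟩ := mem_iUnion.1 (hBF hz)
      rw [pow_succ', mul_assoc]
      exact (infDist_map_le_mul_infDist (hF i) hne (hAF i) w).trans
        (mul_le_mul_of_nonneg_left (ih w hw) r.coe_nonneg)
  intro z hz
  have tendsto_zero : Filter.Tendsto (fun n : ℕ ↦ (r : ℝ) ^ n * D) Filter.atTop (𝓝 0) := by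
    simpa using (tendsto_pow_atTop_nhds_zero_of_lt_one r.coe_nonneg
      (NNReal.coe_lt_one.2 hr)).mul_const D
  rw [hA.mem_iff_infDist_zero hne]
  exact le_antisymm (ge_of_tendsto' tendsto_zero fun n ↦ infDist_le n z hz) infDist_nonneg

theorem exists_mem_frontier_of_isPreconnected [TopologicalSpace X] {s A : Set X}
    (hs : IsPreconnected s) {x y : X} (hx : x ∈ s) (hxA : x ∈ A) (hy : y ∈ s) (hyA : y ∉ A) :
    ∃ z ∈ s, z ∈ frontier A := by
  by_contra! hdisj
  have hsub : s ⊆ interior A ∪ (closure A)ᶜ := fun z hz ↦ by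
    by_cases hzA : z ∈ closure A
    · exact .inl (by_contra fun hzi ↦ hdisj z hz ⟨hzA, hzi⟩)
    · exact .inr hzA
  obtain ⟨z, -, hzi, hzc⟩ := hs _ _ isOpen_interior isClosed_closure.isOpen_compl hsub
    ⟨x, hx, (hsub hx).resolve_right (not_not.2 (subset_closure hxA))⟩
    ⟨y, hy, (hsub hy).resolve_left fun h ↦ hyA (interior_subset h)⟩
  exact hzc (subset_closure (interior_subset hzi))

theorem connectedComponentIn_eq_of_joinedIn [TopologicalSpace X] {s : Set X} {x y : X}
    (h : JoinedIn s x y) : connectedComponentIn s x = connectedComponentIn s y := by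
  obtain ⟨γ, hγ⟩ := h
  refine connectedComponentIn_eq <|
    (isPreconnected_range γ.continuous).subset_connectedComponentIn ⟨0, γ.source⟩
      (range_subset_iff.2 hγ) ⟨1, γ.target⟩

theorem isBounded_connectedComponentIn_of_isometry [PseudoMetricSpace X] {f : X → X}
    (hf : Isometry f) {s : Set X} (hs : MapsTo f s s) {x : X} (hx : x ∈ s)
    (hb : Bornology.IsBounded (connectedComponentIn s (f x))) :
    Bornology.IsBounded (connectedComponentIn s x) :=
  (hf.antilipschitz.isBounded_preimage hb).subset <| image_subset_iff.1 <|
    (hf.continuous.continuousOn.image_connectedComponentIn_subset hx).trans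
      (connectedComponentIn_mono _ hs.image_subset)

variable {E : Type*} [NormedAddCommGroup E] [NormedSpace ℝ E]

theorem joinedIn_of_forall_lineMap_mem {s : Set E} {x y : E} (hx : x ∈ s)
    (h : ∀ t ∈ Ioc (0 : ℝ) 1, AffineMap.lineMap x y t ∈ s) : JoinedIn s x y := by
  refine JoinedIn.of_segment_subset ?_
  rw [segment_eq_image_lineMap]
  rintro _ ⟨t, ht, rfl⟩
  rcases eq_or_lt_of_le ht.1 with rfl | ht0
  · simpa using hx
  · exact h t ⟨ht0, ht.2⟩

theorem not_isBounded_connectedComponentIn_of_ray {s : Set E} {x v : E} (hv : v ≠ 0)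
    (h : ∀ t : ℝ, 0 ≤ t → x + t • v ∈ s) : ¬ Bornology.IsBounded (connectedComponentIn s x) := by
  intro hb
  have ray_subset : (fun t : ℝ ↦ x + t • v) '' Ici 0 ⊆ connectedComponentIn s x :=
    (isPreconnected_Ici.image _ (by fun_prop)).subset_connectedComponentIn
      ⟨0, self_mem_Ici, by simp⟩ (image_subset_iff.2 h)
  obtain ⟨C, hC⟩ := (hb.subset ray_subset).subset_closedBall x
  have hv0 : 0 < ‖v‖ := norm_pos_iff.2 hv
  have hmem := hC (mem_image_of_mem _ (show (|C| + 1) / ‖v‖ ∈ Ici (0 : ℝ) from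
    div_nonneg (by positivity) hv0.le))
  rw [mem_closedBall, dist_self_add_left, norm_smul, Real.norm_eq_abs,
    abs_of_nonneg (by positivity), div_mul_cancel₀ _ hv0.ne'] at hmem
  linarith [le_abs_self C]

theorem infDist_frontier_le_dist {s : Set E} {x y : E} (hx : x ∈ s) (hy : y ∉ s) :
    infDist x (frontier s) ≤ dist x y := by
  obtain ⟨z, hz, hzs⟩ := exists_mem_frontier_of_isPreconnected
    (convex_segment x y).isPreconnected (left_mem_segment ℝ x y) hx (right_mem_segment ℝ x y) hy
  refine (infDist_le_dist_of_mem hzs).trans ?_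
  linarith [dist_add_dist_of_mem_segment hz, dist_nonneg (x := z) (y := y)]

end General

theorem not_isJohnDomain_of_crosscuts {Ω : Set Plane} {P : Plane} {c J : ℝ} (hP : P ∈ closure Ω)
    (hc : 0 ≤ c) (hcJ : c < J)
    (hcut : ∀ x₀ ∈ Ω, ∃ A ∈ 𝓝 P, x₀ ∉ A ∧
      ∀ p ∈ Ω ∩ frontier A, infDist p (frontier Ω) ≤ c * dist p P) :
    ¬ IsJohnDomain Ω J := by
  rintro ⟨x₀, hx₀, hJohn⟩
  obtain ⟨A, hAP, hx₀A, hA⟩ := hcut x₀ hx₀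
  obtain ⟨δ, hδ, hball⟩ := Metric.mem_nhds_iff.1 hAP
  have hJ : 0 < J := hc.trans_lt hcJ
  obtain ⟨x, hxΩ, hxP⟩ := Metric.mem_closure_iff.1 hP (min δ ((J - c) * δ / J))
    (lt_min hδ (div_pos (mul_pos (sub_pos.2 hcJ) hδ) hJ))
  have hxA : x ∈ A := hball (by simpa [dist_comm] using hxP.trans_le (min_le_left _ _))
  obtain ⟨ℓ, γ, hℓ, hγ, hγ0, hγℓ, hγΩ⟩ := hJohn x hxΩ
  obtain ⟨_, ⟨t, ht, rfl⟩, hfrontier⟩ := exists_mem_frontier_of_isPreconnected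
    (isPreconnected_Icc.image γ hγ.continuousOn) ⟨0, left_mem_Icc.2 hℓ, hγ0⟩ hxA
    ⟨ℓ, right_mem_Icc.2 hℓ, hγℓ⟩ hx₀A
  have far : δ ≤ dist (γ t) P := not_lt.1 fun h ↦
    hfrontier.2 (interior_maximal hball isOpen_ball h)
  have travelled : dist (γ t) P ≤ t + dist P x := by
    have hdist : dist (γ t) (γ 0) ≤ t := by
      simpa [abs_of_nonneg ht.1] using hγ.dist_le_mul t ht 0 (left_mem_Icc.2 hℓ)
    rw [hγ0] at hdist
    linarith [dist_triangle (γ t) x P, dist_comm x P]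
  have near : J * dist P x < (J - c) * δ := by
    rw [mul_comm, ← lt_div_iff₀ hJ]
    exact hxP.trans_le (min_le_right _ _)
  have cut : J * t ≤ c * dist (γ t) P :=
    (hγΩ t ht).2.trans (hA _ ⟨(hγΩ t ht).1, hfrontier⟩)
  nlinarith [mul_le_mul_of_nonneg_left travelled hJ.le,
    mul_le_mul_of_nonneg_left far (sub_nonneg.2 hcJ.le)]

section Plane

@[simp] theorem pt_apply_zero (a b : ℝ) : pt a b 0 = a := rfl

@[simp] theorem pt_apply_one (a b : ℝ) : pt a b 1 = b := rfl

theorem plane_ext {z w : Plane} (h0 : z 0 = w 0) (h1 : z 1 = w 1) : z = w := by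
  ext i
  fin_cases i <;> assumption

theorem plane_dist_eq_sqrt (z w : Plane) :
    dist z w = √((z 0 - w 0) ^ 2 + (z 1 - w 1) ^ 2) := by
  simp only [EuclideanSpace.dist_eq, Fin.sum_univ_two, Real.dist_eq, sq_abs]

theorem plane_lineMap_apply (z w : Plane) (t : ℝ) (i : Fin 2) :
    AffineMap.lineMap z w t i = (1 - t) * z i + t * w i := by
  simp [AffineMap.lineMap_apply_module]

/-- The orientation-preserving similarity `z ↦ (a + ib) z + v`, with `Plane` read as `ℂ`. -/
def similarity (a b : ℝ) (v z : Plane) : Plane :=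
  pt (a * z 0 - b * z 1 + v 0) (b * z 0 + a * z 1 + v 1)

theorem rot_add (τ : ℝ) (z v : Plane) :
    rot τ z + v = similarity (Real.cos τ) (Real.sin τ) v z :=
  plane_ext rfl rfl

theorem similarity_smul (a b r : ℝ) (v z : Plane) :
    similarity a b v (r • z) = similarity (r * a) (r * b) v z := by
  refine plane_ext ?_ ?_ <;>
  · simp only [similarity, pt_apply_zero, pt_apply_one, PiLp.smul_apply, smul_eq_mul]
    ring

theorem dist_similarity (a b : ℝ) (v z w : Plane) :
    dist (similarity a b v z) (similarity a b v w) = √(a ^ 2 + b ^ 2) * dist z w := by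
  rw [plane_dist_eq_sqrt, plane_dist_eq_sqrt, ← Real.sqrt_mul (by positivity)]
  congr 1
  simp only [similarity, pt_apply_zero, pt_apply_one]
  ring

theorem isHomeomorph_similarity {a b : ℝ} (hab : a ^ 2 + b ^ 2 ≠ 0) (v : Plane) :
    IsHomeomorph (similarity a b v) := by
  have hcont (a b : ℝ) (v : Plane) : Continuous (similarity a b v) :=
    (LipschitzWith.of_dist_le' fun z w ↦ (dist_similarity a b v z w).le).continuous
  refine isHomeomorph_iff_exists_inverse.2 ⟨hcont a b v,
    fun z ↦ similarity (a / (a ^ 2 + b ^ 2)) (-b / (a ^ 2 + b ^ 2)) 0 (z - v), fun z ↦ ?_,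
    fun z ↦ ?_, (hcont _ _ _).comp (continuous_id.sub continuous_const)⟩ <;>
  · refine plane_ext ?_ ?_ <;>
    · simp only [similarity, pt_apply_zero, pt_apply_one, PiLp.sub_apply, PiLp.zero_apply]
      field_simp
      ring

/-- The reflection in the symmetry axis `{z | z 0 = 1 / 2}` of the Koch curve and of the
snowflake. -/
def reflect (z : Plane) : Plane := pt (1 - z 0) (z 1)

@[simp] theorem reflect_apply_zero (z : Plane) : reflect z 0 = 1 - z 0 := rfl

@[simp] theorem reflect_apply_one (z : Plane) : reflect z 1 = z 1 := rfl

@[simp] theorem reflect_pt (a b : ℝ) : reflect (pt a b) = pt (1 - a) b := rfl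

@[simp] theorem reflect_reflect (z : Plane) : reflect (reflect z) = z :=
  plane_ext (by simp) (by simp)

theorem isometry_reflect : Isometry reflect := Isometry.of_dist_eq fun z w ↦ by
  simp only [plane_dist_eq_sqrt, reflect_apply_zero, reflect_apply_one]
  congr 1
  ring

end Plane

section KochMaps

variable {l : ℝ}

/-- The height `h = √(l - 1/4)` of the Koch curve above its base. -/
def kochHeight (l : ℝ) : ℝ := √(l - 1 / 4)

theorem kochHeight_sq (hl : 1 / 4 ≤ l) : kochHeight l ^ 2 = l - 1 / 4 :=
  Real.sq_sqrt (sub_nonneg.2 hl)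

theorem kochHeight_pos (hl : 1 / 4 < l) : 0 < kochHeight l :=
  Real.sqrt_pos.2 (sub_pos.2 hl)

theorem cos_kochAngle (hl : 1 / 4 ≤ l) : Real.cos (kochAngle l) = (1 / 2 - l) / l := by
  have hl0 : 0 < l := by linarith
  refine Real.cos_arccos ?_ ?_
  · rw [le_div_iff₀ hl0]
    linarith
  · rw [div_le_iff₀ hl0]
    linarith

theorem sin_kochAngle (hl : 1 / 4 ≤ l) : Real.sin (kochAngle l) = kochHeight l / l := by
  have hl0 : 0 < l := by linarith
  have one_sub_sq : 1 - ((1 / 2 - l) / l) ^ 2 = (kochHeight l / l) ^ 2 := by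
    rw [div_pow, div_pow, kochHeight_sq hl]
    field_simp
    ring
  rw [kochAngle, Real.sin_arccos, one_sub_sq]
  exact Real.sqrt_sq (div_nonneg (Real.sqrt_nonneg _) hl0.le)

theorem kochF_zero (l : ℝ) : kochF l 0 = similarity l 0 (pt 0 0) := by
  funext z
  refine plane_ext ?_ ?_ <;> simp [kochF, similarity]

theorem kochF_one (hl : 1 / 4 ≤ l) :
    kochF l 1 = similarity (1 / 2 - l) (kochHeight l) (pt l 0) := by
  have hl0 : l ≠ 0 := by linarith
  funext z
  change rot (kochAngle l) (l • z) + pt l 0 = _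
  rw [rot_add, similarity_smul, cos_kochAngle hl, sin_kochAngle hl, mul_div_cancel₀ _ hl0,
    mul_div_cancel₀ _ hl0]

theorem kochF_two (hl : 1 / 4 ≤ l) :
    kochF l 2 = similarity (1 / 2 - l) (-kochHeight l) (pt (1 / 2) (kochHeight l)) := by
  have hl0 : l ≠ 0 := by linarith
  funext z
  change rot (-kochAngle l) (l • z) + pt (1 / 2) (kochHeight l) = _
  rw [rot_add, similarity_smul, Real.cos_neg, Real.sin_neg, cos_kochAngle hl, sin_kochAngle hl,
    mul_neg, mul_div_cancel₀ _ hl0, mul_div_cancel₀ _ hl0]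

theorem kochF_three (l : ℝ) : kochF l 3 = similarity l 0 (pt (1 - l) 0) := by
  funext z
  refine plane_ext ?_ ?_ <;> simp [kochF, similarity]

theorem exists_kochF_eq_similarity (hl : 1 / 4 ≤ l) (i : Fin 4) :
    ∃ a b v, a ^ 2 + b ^ 2 = l ^ 2 ∧ kochF l i = similarity a b v := by
  have hsq := kochHeight_sq hl
  fin_cases i
  · exact ⟨_, _, _, by ring, kochF_zero l⟩
  · exact ⟨_, _, _, by linear_combination hsq, kochF_one hl⟩
  · exact ⟨_, _, _, by linear_combination hsq, kochF_two hl⟩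
  · exact ⟨_, _, _, by ring, kochF_three l⟩

theorem dist_kochF (hl : 1 / 4 ≤ l) (i : Fin 4) (z w : Plane) :
    dist (kochF l i z) (kochF l i w) = l * dist z w := by
  obtain ⟨a, b, v, hab, hF⟩ := exists_kochF_eq_similarity hl i
  rw [hF, dist_similarity, hab, Real.sqrt_sq (by linarith)]

theorem lipschitzWith_kochF (hl : 1 / 4 ≤ l) (i : Fin 4) :
    LipschitzWith l.toNNReal (kochF l i) :=
  LipschitzWith.of_dist_le' fun z w ↦ (dist_kochF hl i z w).le

theorem isHomeomorph_kochF (hl : 1 / 4 ≤ l) (i : Fin 4) : IsHomeomorph (kochF l i) := by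
  obtain ⟨a, b, v, hab, hF⟩ := exists_kochF_eq_similarity hl i
  have : l ≠ 0 := by linarith
  exact hF ▸ isHomeomorph_similarity (by rw [hab]; positivity) v

theorem kochF_rev_reflect (hl : 1 / 4 ≤ l) (i : Fin 4) (z : Plane) :
    kochF l i.rev (reflect z) = reflect (kochF l i z) := by
  fin_cases i <;> refine plane_ext ?_ ?_ <;>
  · simp only [Fin.zero_eta, Fin.mk_one, Fin.reduceFinMk, Fin.isValue, Fin.reduceRev, kochF_zero,
      kochF_one hl, kochF_two hl, kochF_three, similarity, reflect_apply_zero, reflect_apply_one,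
      pt_apply_zero, pt_apply_one]
    ring

theorem forall_fin_four_of_rev {p : Fin 4 → Prop} (h0 : p 0) (h1 : p 1)
    (hrev : ∀ i : Fin 4, p i → p i.rev) (i : Fin 4) : p i := by
  fin_cases i
  exacts [h0, h1, hrev 1 h1, hrev 0 h0]

end KochMaps

section KochTriangle

variable {l : ℝ}

/-- The isosceles triangle with base from `pt 0 0` to `pt 1 0` and apex `pt (1 / 2) (kochHeight l)`,
which the Koch maps send into itself. -/
def kochTriangle (l : ℝ) : Set Plane :=
  {z | 0 ≤ z 1 ∧ z 1 ≤ 2 * kochHeight l * z 0 ∧ z 1 ≤ 2 * kochHeight l * (1 - z 0)}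

theorem mem_kochTriangle_iff {z : Plane} : z ∈ kochTriangle l ↔
    0 ≤ z 1 ∧ z 1 ≤ 2 * kochHeight l * z 0 ∧ z 1 ≤ 2 * kochHeight l * (1 - z 0) :=
  Iff.rfl

theorem isClosed_kochTriangle (l : ℝ) : IsClosed (kochTriangle l) := by
  simp only [kochTriangle, ofPred_and]
  exact (isClosed_le (by fun_prop) (by fun_prop)).inter
    ((isClosed_le (by fun_prop) (by fun_prop)).inter (isClosed_le (by fun_prop) (by fun_prop)))

theorem convex_kochTriangle (l : ℝ) : Convex ℝ (kochTriangle l) := by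
  rintro z ⟨hz0, hzL, hzR⟩ w ⟨hw0, hwL, hwR⟩ a b ha hb hab
  simp only [mem_kochTriangle_iff, PiLp.add_apply, PiLp.smul_apply, smul_eq_mul]
  refine ⟨by positivity, ?_, ?_⟩
  · linear_combination a * hzL + b * hwL
  · linear_combination a * hzR + b * hwR + 2 * kochHeight l * hab

theorem zero_mem_kochTriangle (l : ℝ) : pt 0 0 ∈ kochTriangle l := by
  simp [kochTriangle, kochHeight]

theorem reflect_mem_kochTriangle {z : Plane} (hz : z ∈ kochTriangle l) :
    reflect z ∈ kochTriangle l := by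
  simpa [kochTriangle, and_comm] using hz

theorem mem_Icc_of_mem_kochTriangle (hl : 1 / 4 < l) {z : Plane} (hz : z ∈ kochTriangle l) :
    z 0 ∈ Icc (0 : ℝ) 1 := by
  have hh := kochHeight_pos hl
  obtain ⟨h0, hL, hR⟩ := hz
  constructor
  · exact nonneg_of_mul_nonneg_right (h0.trans hL) (by positivity)
  · exact sub_nonneg.1 (nonneg_of_mul_nonneg_right (h0.trans hR) (by positivity))

theorem isBounded_kochTriangle (hl : 1 / 4 < l) : Bornology.IsBounded (kochTriangle l) := by
  have hh := kochHeight_pos hl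
  refine (isBounded_iff_subset_closedBall (pt 0 0)).2 ⟨√(1 ^ 2 + (2 * kochHeight l) ^ 2),
    fun z hz ↦ ?_⟩
  obtain ⟨hz0, hz1⟩ := mem_Icc_of_mem_kochTriangle hl hz
  rw [mem_closedBall, plane_dist_eq_sqrt]
  simp only [pt_apply_zero, pt_apply_one, sub_zero]
  have := hz.1
  have : z 1 ≤ 2 * kochHeight l := hz.2.1.trans (by nlinarith)
  gcongr

theorem mapsTo_kochF_kochTriangle (hl : l ∈ Ioo (1 / 4 : ℝ) (1 / 2)) (i : Fin 4) :
    MapsTo (kochF l i) (kochTriangle l) (kochTriangle l) := by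
  obtain ⟨hl1, hl2⟩ := hl
  have hh := kochHeight_pos hl1
  have hsq := kochHeight_sq hl1.le
  revert i
  refine forall_fin_four_of_rev (fun z hz ↦ ?_) (fun z hz ↦ ?_) (fun i hi z hz ↦ ?_)
  · obtain ⟨h0, hL, hR⟩ := hz
    simp only [kochF_zero, mem_kochTriangle_iff, similarity, pt_apply_zero, pt_apply_one]
    refine ⟨by nlinarith, by nlinarith, by nlinarith⟩
  · obtain ⟨_, _⟩ := mem_Icc_of_mem_kochTriangle hl1 hz
    obtain ⟨h0, hL, hR⟩ := hz
    simp only [kochF_one hl1.le, mem_kochTriangle_iff, similarity, pt_apply_zero, pt_apply_one]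
    refine ⟨by nlinarith, by nlinarith, by nlinarith⟩
  · rw [← reflect_reflect z, kochF_rev_reflect hl1.le]
    exact reflect_mem_kochTriangle (hi (reflect_mem_kochTriangle hz))

end KochTriangle

/-- `K` is a Koch curve with parameter `l`: a nonempty compact set which is the union of its images
under the four Koch maps. -/
structure IsKochCurve (l : ℝ) (K : Set Plane) : Prop where
  nonempty : K.Nonempty
  isCompact : IsCompact K
  eq_iUnion_image : K = ⋃ i, kochF l i '' K

namespace IsKochCurve

variable {l : ℝ} {K : Set Plane}

theorem of_eq_union (hne : K.Nonempty) (hcomp : IsCompact K)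
    (hK : K = kochF l 0 '' K ∪ kochF l 1 '' K ∪ kochF l 2 '' K ∪ kochF l 3 '' K) :
    IsKochCurve l K := by
  refine ⟨hne, hcomp, hK.trans ?_⟩
  ext w
  simp only [mem_union, mem_iUnion, Fin.exists_fin_succ, Fin.exists_fin_zero, or_assoc, or_false]
  rfl

theorem mapsTo_kochF (hK : IsKochCurve l K) (i : Fin 4) : MapsTo (kochF l i) K K :=
  mapsTo_iff_image_subset.2 <| (subset_iUnion (fun i ↦ kochF l i '' K) i).trans
    hK.eq_iUnion_image.ge

theorem exists_kochF_eq (hK : IsKochCurve l K) {w : Plane} (hw : w ∈ K) :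
    ∃ i, ∃ z ∈ K, kochF l i z = w :=
  mem_iUnion.1 (hK.eq_iUnion_image.le hw)

theorem subset_kochTriangle (hK : IsKochCurve l K) (hl : l ∈ Ioo (1 / 4 : ℝ) (1 / 2)) :
    K ⊆ kochTriangle l :=
  subset_of_subset_iUnion_image (Real.toNNReal_lt_one.2 (by linarith [hl.2]))
    (lipschitzWith_kochF hl.1.le) hK.isCompact.isBounded hK.eq_iUnion_image.le
    (isClosed_kochTriangle l) ⟨_, zero_mem_kochTriangle l⟩ (mapsTo_kochF_kochTriangle hl)

theorem subset_of_subset_iUnion_image (hK : IsKochCurve l K) (hl : l ∈ Ioo (1 / 4 : ℝ) (1 / 2))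
    {B : Set Plane} (hB : Bornology.IsBounded B) (hBF : B ⊆ ⋃ i, kochF l i '' B) : B ⊆ K :=
  _root_.subset_of_subset_iUnion_image (Real.toNNReal_lt_one.2 (by linarith [hl.2]))
    (lipschitzWith_kochF hl.1.le) hB hBF hK.isCompact.isClosed hK.nonempty hK.mapsTo_kochF

theorem mem_of_kochF_eq_self (hK : IsKochCurve l K) (hl : l ∈ Ioo (1 / 4 : ℝ) (1 / 2))
    {i : Fin 4} {p : Plane} (hp : kochF l i p = p) : p ∈ K :=
  hK.subset_of_subset_iUnion_image hl Bornology.isBounded_singleton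
    (singleton_subset_iff.2 (mem_iUnion.2 ⟨i, p, rfl, hp⟩)) rfl

theorem reflect_mem (hK : IsKochCurve l K) (hl : l ∈ Ioo (1 / 4 : ℝ) (1 / 2)) {z : Plane}
    (hz : z ∈ K) : reflect z ∈ K := by
  refine hK.subset_of_subset_iUnion_image hl (B := reflect '' K)
    (isometry_reflect.lipschitz.isBounded_image hK.isCompact.isBounded) ?_ (mem_image_of_mem _ hz)
  rintro _ ⟨w, hw, rfl⟩
  obtain ⟨i, z, hz, rfl⟩ := hK.exists_kochF_eq hw
  exact mem_iUnion.2 ⟨i.rev, reflect z, mem_image_of_mem _ hz, kochF_rev_reflect hl.1.le i z⟩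

theorem zero_mem (hK : IsKochCurve l K) (hl : l ∈ Ioo (1 / 4 : ℝ) (1 / 2)) : pt 0 0 ∈ K :=
  hK.mem_of_kochF_eq_self hl (i := 0) (by simp [kochF_zero, similarity])

theorem one_mem (hK : IsKochCurve l K) (hl : l ∈ Ioo (1 / 4 : ℝ) (1 / 2)) : pt 1 0 ∈ K := by
  simpa using hK.reflect_mem hl (hK.zero_mem hl)

end IsKochCurve

section Junctions

variable {l : ℝ}

theorem kochF_apply_zero_le_half (hl : l ∈ Ioo (1 / 4 : ℝ) (1 / 2)) {i : Fin 4} (hi : i ≤ 1)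
    {z : Plane} (hz : z ∈ kochTriangle l) : kochF l i z 0 ≤ 1 / 2 := by
  obtain ⟨hl1, hl2⟩ := hl
  have hz0 := (mem_Icc_of_mem_kochTriangle hl1 hz).2
  have hh := mul_nonneg (kochHeight_pos hl1).le hz.1
  obtain rfl | rfl : i = 0 ∨ i = 1 := by lia
  · simp only [kochF_zero, similarity, pt_apply_zero]
    nlinarith
  · simp only [kochF_one hl1.le, similarity, pt_apply_zero]
    nlinarith

theorem eq_of_kochF_apply_zero_eq_half (hl : l ∈ Ioo (1 / 4 : ℝ) (1 / 2)) {i : Fin 4} (hi : i ≤ 1)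
    {z : Plane} (hz : z ∈ kochTriangle l) (h : kochF l i z 0 = 1 / 2) : z = pt 1 0 := by
  obtain ⟨hl1, hl2⟩ := hl
  have hz0 := (mem_Icc_of_mem_kochTriangle hl1 hz).2
  have hh := kochHeight_pos hl1
  have hz1 := hz.1
  obtain rfl | rfl : i = 0 ∨ i = 1 := by lia
  · simp only [kochF_zero, similarity, pt_apply_zero] at h
    nlinarith
  · simp only [kochF_one hl1.le, similarity, pt_apply_zero] at h
    exact plane_ext (by simp only [pt_apply_zero]; nlinarith)
      (by simp only [pt_apply_one]; nlinarith)

theorem half_le_kochF_apply_zero (hl : l ∈ Ioo (1 / 4 : ℝ) (1 / 2)) {i : Fin 4} (hi : 1 < i)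
    {z : Plane} (hz : z ∈ kochTriangle l) : 1 / 2 ≤ kochF l i z 0 := by
  have hi' : i.rev ≤ 1 := by have := Fin.val_rev i; lia
  have := kochF_apply_zero_le_half hl hi' (reflect_mem_kochTriangle hz)
  rw [kochF_rev_reflect hl.1.le, reflect_apply_zero] at this
  linarith

theorem kochHeight_mul_kochF_sub_le (hl : l ∈ Ioo (1 / 4 : ℝ) (1 / 2)) {i : Fin 4} (hi : i ≤ 1)
    {z : Plane} (hz : z ∈ kochTriangle l) :
    kochHeight l * (kochF l i z 0 - l) ≤ (1 / 2 - l) * kochF l i z 1 := by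
  obtain ⟨hl1, hl2⟩ := hl
  have hh := kochHeight_pos hl1
  obtain rfl | rfl : i = 0 ∨ i = 1 := by lia
  · have : 0 ≤ kochHeight l * l * (1 - z 0) :=
      mul_nonneg (by positivity) (sub_nonneg.2 (mem_Icc_of_mem_kochTriangle hl1 hz).2)
    have : 0 ≤ (1 / 2 - l) * l * z 1 :=
      mul_nonneg (mul_nonneg (by linarith) (by linarith)) hz.1
    simp only [kochF_zero, similarity, pt_apply_zero, pt_apply_one]
    linarith
  · have : 0 ≤ l ^ 2 * z 1 := mul_nonneg (by positivity) hz.1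
    simp only [kochF_one hl1.le, similarity, pt_apply_zero, pt_apply_one]
    linear_combination this - z 1 * kochHeight_sq hl1.le

theorem le_kochF_one_sub_line (hl : l ∈ Ioo (1 / 4 : ℝ) (1 / 2)) {z : Plane}
    (hz : z ∈ kochTriangle l) : (1 - 2 * l) * (2 * kochHeight l * z 0 + z 1) ≤
      kochF l 1 z 1 - 2 * kochHeight l * (l - kochF l 1 z 0) := by
  have hl0 : 0 < l := by linarith [hl.1]
  simp only [kochF_one hl.1.le, similarity, pt_apply_zero, pt_apply_one]
  linear_combination l * hz.2.1 + 2 * z 1 * kochHeight_sq hl.1.le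

theorem eq_endpoints_of_kochF_zero_eq_kochF_one (hl : l ∈ Ioo (1 / 4 : ℝ) (1 / 2)) {z w : Plane}
    (hz : z ∈ kochTriangle l) (hw : w ∈ kochTriangle l) (h : kochF l 0 z = kochF l 1 w) :
    z = pt 1 0 ∧ w = pt 0 0 := by
  obtain ⟨hl1, hl2⟩ := hl
  have hh := kochHeight_pos hl1
  have h0 : l * z 0 = (1 / 2 - l) * w 0 - kochHeight l * w 1 + l := by
    simpa [kochF_zero, kochF_one hl1.le, similarity] using congr($h 0)
  have h1 : l * z 1 = kochHeight l * w 0 + (1 / 2 - l) * w 1 := by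
    simpa [kochF_zero, kochF_one hl1.le, similarity] using congr($h 1)
  have hw0 := (mem_Icc_of_mem_kochTriangle hl1 hw).1
  have below_line : kochF l 1 w 1 - 2 * kochHeight l * (l - kochF l 1 w 0) ≤ 0 := by
    rw [← h]
    simp only [kochF_zero, similarity, pt_apply_zero, pt_apply_one]
    nlinarith [hz.2.2]
  have w_eq : w = pt 0 0 := by
    have sum_nonpos : 2 * kochHeight l * w 0 + w 1 ≤ 0 :=
      nonpos_of_mul_nonpos_right ((le_kochF_one_sub_line ⟨hl1, hl2⟩ hw).trans below_line)
        (by linarith)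
    have hw0' : 0 ≤ kochHeight l * w 0 := by positivity
    exact plane_ext (by simp only [pt_apply_zero]; nlinarith [hw.1])
      (by simp only [pt_apply_one]; linarith [hw.1])
  subst w_eq
  simp only [pt_apply_zero, pt_apply_one] at h0 h1
  refine ⟨plane_ext ?_ ?_, rfl⟩
  · simp only [pt_apply_zero]; nlinarith
  · simp only [pt_apply_one]; nlinarith

theorem eq_endpoints_of_kochF_eq (hl : l ∈ Ioo (1 / 4 : ℝ) (1 / 2)) {i j : Fin 4} (hij : i < j)
    {z w : Plane} (hz : z ∈ kochTriangle l) (hw : w ∈ kochTriangle l)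
    (h : kochF l i z = kochF l j w) : z = pt 1 0 ∧ w = pt 0 0 := by
  have reflected : kochF l j.rev (reflect w) = kochF l i.rev (reflect z) := by
    rw [kochF_rev_reflect hl.1.le, kochF_rev_reflect hl.1.le, h]
  have hw' := reflect_mem_kochTriangle hw
  have hz' := reflect_mem_kochTriangle hz
  rcases le_or_gt i 1 with hi | hi
  · rcases le_or_gt j 1 with hj | hj
    · obtain ⟨rfl, rfl⟩ : i = 0 ∧ j = 1 := by lia
      exact eq_endpoints_of_kochF_zero_eq_kochF_one hl hz hw h
    · have hj' : j.rev ≤ 1 := by have := Fin.val_rev j; lia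
      have hzle := kochF_apply_zero_le_half hl hi hz
      have hwle := kochF_apply_zero_le_half hl hj' hw'
      have hjw : kochF l j.rev (reflect w) 0 = 1 - kochF l i z 0 := by
        rw [kochF_rev_reflect hl.1.le, reflect_apply_zero, h]
      have hw1 := eq_of_kochF_apply_zero_eq_half hl hj' hw' (by linarith)
      exact ⟨eq_of_kochF_apply_zero_eq_half hl hi hz (by linarith),
        by simpa using congrArg reflect hw1⟩
  · obtain ⟨rfl, rfl⟩ : i = 2 ∧ j = 3 := by lia
    obtain ⟨hw1, hz0⟩ := eq_endpoints_of_kochF_zero_eq_kochF_one hl hw' hz' reflected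
    constructor
    · simpa using congrArg reflect hz0
    · simpa using congrArg reflect hw1

end Junctions

section Gaps

variable {l : ℝ}

/-- The two legs of the Koch triangle, extended to lines. -/
def kochLegs (l : ℝ) : Set Plane :=
  {z | z 1 = 2 * kochHeight l * z 0 ∨ z 1 = 2 * kochHeight l * (1 - z 0)}

/-- The base of the Koch triangle, extended to a line. -/
def kochBase : Set Plane := {z | z 1 = 0}

/-- The part of the Koch triangle between its subtriangles `kochF l 0 '' kochTriangle l` and
`kochF l 1 '' kochTriangle l`. -/
def leftGap (l : ℝ) : Set Plane :=
  {w ∈ kochTriangle l | 2 * kochHeight l * (l - w 0) ≤ w 1 ∧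
    (3 * l - 1) * w 1 ≤ 2 * kochHeight l * (1 - l) * (l - w 0)}

/-- The part of the Koch triangle between its subtriangles `kochF l 1 '' kochTriangle l` and
`kochF l 2 '' kochTriangle l`. -/
def baseGap (l : ℝ) : Set Plane :=
  {w ∈ kochTriangle l | (1 / 2 - l) * w 1 ≤ kochHeight l * (w 0 - l) ∧
    (1 / 2 - l) * w 1 ≤ kochHeight l * (1 - l - w 0)}

theorem mapsTo_reflect_kochLegs (l : ℝ) : MapsTo reflect (kochLegs l) (kochLegs l) :=
  fun z hz ↦ by simpa [kochLegs, or_comm] using hz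

theorem mapsTo_reflect_kochBase : MapsTo reflect kochBase kochBase := fun _ hz ↦ hz

theorem mem_image_kochF_zero (hl : 1 / 4 ≤ l) {w : Plane} (hw : w ∈ kochTriangle l)
    (h : w 1 ≤ 2 * kochHeight l * (l - w 0)) : w ∈ kochF l 0 '' kochTriangle l := by
  have hl0 : 0 < l := by linarith
  obtain ⟨z, rfl⟩ := (isHomeomorph_kochF hl 0).surjective w
  refine mem_image_of_mem _ ?_
  simp only [kochF_zero, mem_kochTriangle_iff, similarity, pt_apply_zero, pt_apply_one] at hw h
  refine mem_kochTriangle_iff.2 ⟨?_, ?_, ?_⟩ <;> refine le_of_mul_le_mul_left ?_ hl0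
  · linear_combination hw.1
  · linear_combination hw.2.1
  · linear_combination h

theorem mem_image_kochF_one (hl : 1 / 4 ≤ l) {w : Plane} (hw : w ∈ kochTriangle l)
    (hbase : kochHeight l * (w 0 - l) ≤ (1 / 2 - l) * w 1)
    (hleg : 2 * kochHeight l * (1 - l) * (l - w 0) ≤ (3 * l - 1) * w 1) :
    w ∈ kochF l 1 '' kochTriangle l := by
  have hl0 : 0 < l := by linarith
  have hsq := kochHeight_sq hl
  obtain ⟨z, rfl⟩ := (isHomeomorph_kochF hl 1).surjective w
  refine mem_image_of_mem _ ?_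
  simp only [kochF_one hl, mem_kochTriangle_iff, similarity, pt_apply_zero, pt_apply_one]
    at hw hbase hleg
  refine mem_kochTriangle_iff.2 ⟨?_, ?_, ?_⟩
  · refine le_of_mul_le_mul_left ?_ (pow_pos hl0 2)
    linear_combination hbase + z 1 * hsq
  · refine le_of_mul_le_mul_left ?_ (pow_pos hl0 2)
    linear_combination hleg - 2 * (1 - l) * z 1 * hsq
  · refine le_of_mul_le_mul_left ?_ hl0
    linear_combination hw.2.1 - 2 * z 1 * hsq

theorem mem_image_kochF_or_mem_gap (hl : 1 / 4 < l) {w : Plane} (hw : w ∈ kochTriangle l)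
    (hw0 : w 0 ≤ 1 / 2) :
    (∃ i, w ∈ kochF l i '' kochTriangle l) ∨ w ∈ leftGap l ∨ w ∈ baseGap l := by
  rcases le_total (w 1) (2 * kochHeight l * (l - w 0)) with h0 | h0
  · exact .inl ⟨0, mem_image_kochF_zero hl.le hw h0⟩
  rcases le_total ((1 / 2 - l) * w 1) (kochHeight l * (w 0 - l)) with hb | hb
  · refine .inr (.inr ⟨hw, hb, hb.trans ?_⟩)
    nlinarith [kochHeight_pos hl]
  rcases le_total ((3 * l - 1) * w 1) (2 * kochHeight l * (1 - l) * (l - w 0)) with hleg | hleg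
  · exact .inr (.inl ⟨hw, h0, hleg⟩)
  · exact .inl ⟨1, mem_image_kochF_one hl.le hw hb hleg⟩

end Gaps

section Access

/-- The point `z` can be joined to the set `A` inside the Koch triangle without meeting `K`. -/
def Accesses (l : ℝ) (K A : Set Plane) (z : Plane) : Prop :=
  ∃ w ∈ A, JoinedIn (kochTriangle l \ K) z w

variable {l : ℝ} {K A : Set Plane}

theorem accesses_of_mem {z : Plane} (hz : z ∈ kochTriangle l \ K) (hA : z ∈ A) : Accesses l K A z :=
  ⟨z, hA, .refl hz⟩

namespace IsKochCurve

theorem mapsTo_kochF_diff (hK : IsKochCurve l K) (hl : l ∈ Ioo (1 / 4 : ℝ) (1 / 2)) (i : Fin 4) :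
    MapsTo (kochF l i) (kochTriangle l \ K) (kochTriangle l \ K) := by
  rintro z ⟨hz, hzK⟩
  refine ⟨mapsTo_kochF_kochTriangle hl i hz, fun hmem ↦ ?_⟩
  obtain ⟨j, w, hw, hwz⟩ := hK.exists_kochF_eq hmem
  have hwT := hK.subset_kochTriangle hl hw
  rcases lt_trichotomy i j with hij | rfl | hij
  · exact hzK ((eq_endpoints_of_kochF_eq hl hij hz hwT hwz.symm).1 ▸ hK.one_mem hl)
  · exact hzK ((isHomeomorph_kochF hl.1.le i).injective hwz ▸ hw)
  · exact hzK ((eq_endpoints_of_kochF_eq hl hij hwT hz hwz).2 ▸ hK.zero_mem hl)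

theorem reflect_mem_diff (hK : IsKochCurve l K) (hl : l ∈ Ioo (1 / 4 : ℝ) (1 / 2)) {z : Plane}
    (hz : z ∈ kochTriangle l \ K) : reflect z ∈ kochTriangle l \ K :=
  ⟨reflect_mem_kochTriangle hz.1, fun h ↦ hz.2 (reflect_reflect z ▸ hK.reflect_mem hl h)⟩

theorem accesses_reflect (hK : IsKochCurve l K) (hl : l ∈ Ioo (1 / 4 : ℝ) (1 / 2))
    (hA : MapsTo reflect A A) {z : Plane} (hz : Accesses l K A z) :
    Accesses l K A (reflect z) := by
  obtain ⟨w, hw, hzw⟩ := hz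
  exact ⟨reflect w, hA hw, (hzw.map isometry_reflect.continuous).mono
    (image_subset_iff.2 fun _ ↦ hK.reflect_mem_diff hl)⟩

theorem accesses_kochF (hK : IsKochCurve l K) (hl : l ∈ Ioo (1 / 4 : ℝ) (1 / 2))
    (hA : MapsTo reflect A A)
    (h0 : ∀ w ∈ A, w ∈ kochTriangle l \ K → Accesses l K A (kochF l 0 w))
    (h1 : ∀ w ∈ A, w ∈ kochTriangle l \ K → Accesses l K A (kochF l 1 w)) (i : Fin 4) :
    ∀ z, Accesses l K A z → Accesses l K A (kochF l i z) := by
  have of_forall (i : Fin 4)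
      (h : ∀ w ∈ A, w ∈ kochTriangle l \ K → Accesses l K A (kochF l i w)) (z : Plane)
      (hz : Accesses l K A z) : Accesses l K A (kochF l i z) := by
    obtain ⟨w, hw, hzw⟩ := hz
    obtain ⟨a, ha, hwa⟩ := h w hw hzw.target_mem
    exact ⟨a, ha, ((hzw.map (isHomeomorph_kochF hl.1.le i).continuous).mono
      (mapsTo_iff_image_subset.1 (hK.mapsTo_kochF_diff hl i))).trans hwa⟩
  refine forall_fin_four_of_rev (p := fun i ↦ ∀ z, Accesses l K A z → Accesses l K A (kochF l i z))
    (of_forall 0 h0) (of_forall 1 h1) (fun i hi z hz ↦ ?_) i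
  rw [← reflect_reflect z, kochF_rev_reflect hl.1.le]
  exact hK.accesses_reflect hl hA (hi _ (hK.accesses_reflect hl hA hz))

theorem notMem_of_between_kochF_zero_one (hK : IsKochCurve l K) (hl : l ∈ Ioo (1 / 4 : ℝ) (1 / 2))
    {w : Plane} (hw : w ∈ kochTriangle l) (h0 : 2 * kochHeight l * (l - w 0) < w 1)
    (h1 : (3 * l - 1) * w 1 < 2 * kochHeight l * (1 - l) * (l - w 0)) : w ∉ K := by
  have hh := kochHeight_pos hl.1
  have hl0 : 0 < l := by linarith [hl.1]
  have apply_zero_lt_half : w 0 < 1 / 2 := by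
    by_contra! hw0
    have : 0 < 1 - 2 * l := by linarith [hl.2]
    have : 0 < 1 - l := by linarith [hl.2]
    have below_right_leg := mul_le_mul_of_nonneg_left hw.2.2
      (by positivity : 0 ≤ (1 - l) * (1 - 2 * l))
    have : 0 ≤ 2 * l ^ 2 * w 1 := mul_nonneg (by positivity) hw.1
    have : 0 ≤ (1 - l) * (2 * kochHeight l) * ((1 - l) * (2 * w 0 - 1)) :=
      mul_nonneg (by positivity) (mul_nonneg (by linarith) (by linarith))
    linarith
  intro hwK
  obtain ⟨i, z, hz, rfl⟩ := hK.exists_kochF_eq hwK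
  have hzT := hK.subset_kochTriangle hl hz
  rcases le_or_gt i 1 with hi | hi
  · obtain rfl | rfl : i = 0 ∨ i = 1 := by lia
    · simp only [kochF_zero, similarity, pt_apply_zero, pt_apply_one] at h0
      linarith [mul_le_mul_of_nonneg_left hzT.2.2 hl0.le]
    · simp only [kochF_one hl.1.le, similarity, pt_apply_zero, pt_apply_one] at h1
      refine h1.not_ge ?_
      linear_combination l ^ 2 * hzT.2.1 + 2 * (1 - l) * z 1 * kochHeight_sq hl.1.le
  · exact apply_zero_lt_half.not_ge (half_le_kochF_apply_zero hl hi hzT)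

theorem notMem_of_between_kochF_one_two (hK : IsKochCurve l K) (hl : l ∈ Ioo (1 / 4 : ℝ) (1 / 2))
    {w : Plane} (h1 : (1 / 2 - l) * w 1 < kochHeight l * (w 0 - l))
    (h2 : (1 / 2 - l) * w 1 < kochHeight l * (1 - l - w 0)) : w ∉ K := by
  intro hwK
  obtain ⟨i, z, hz, rfl⟩ := hK.exists_kochF_eq hwK
  have hzT := hK.subset_kochTriangle hl hz
  rcases le_or_gt i 1 with hi | hi
  · exact h1.not_ge (kochHeight_mul_kochF_sub_le hl hi hzT)
  · have hi' : i.rev ≤ 1 := by have := Fin.val_rev i; lia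
    have := kochHeight_mul_kochF_sub_le hl hi' (reflect_mem_kochTriangle hzT)
    simp only [kochF_rev_reflect hl.1.le, reflect_apply_zero, reflect_apply_one] at this
    linarith

theorem accesses_legs_of_mem_leftGap (hK : IsKochCurve l K) (hl : l ∈ Ioo (1 / 4 : ℝ) (1 / 2))
    {z : Plane} (hz : z ∈ leftGap l) (hzK : z ∉ K) : Accesses l K (kochLegs l) z := by
  have hh := kochHeight_pos hl.1
  have : 0 < 1 - 2 * l := by linarith [hl.2]
  have : 0 < l := by linarith [hl.1]
  refine ⟨pt (1 / 4) (kochHeight l / 2), .inl ?_,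
    joinedIn_of_forall_lineMap_mem ⟨hz.1, hzK⟩ fun t ht ↦ ?_⟩
  · simp only [pt_apply_zero, pt_apply_one]
    ring
  have hcT : pt (1 / 4) (kochHeight l / 2) ∈ kochTriangle l := by
    simp only [mem_kochTriangle_iff, pt_apply_zero, pt_apply_one]
    exact ⟨by positivity, by linarith, by linarith⟩
  have mem_triangle := (convex_kochTriangle l).lineMap_mem hz.1 hcT ⟨ht.1.le, ht.2⟩
  have h1t : 0 ≤ 1 - t := sub_nonneg.2 ht.2
  refine ⟨mem_triangle, hK.notMem_of_between_kochF_zero_one hl mem_triangle ?_ ?_⟩ <;>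
    simp only [plane_lineMap_apply, pt_apply_zero, pt_apply_one]
  · have : 0 < t * (kochHeight l * (1 - 2 * l)) := mul_pos ht.1 (by positivity)
    linarith [mul_le_mul_of_nonneg_left hz.2.1 h1t]
  · have : 0 < t * (kochHeight l * l * (1 - 2 * l)) := mul_pos ht.1 (by positivity)
    linarith [mul_le_mul_of_nonneg_left hz.2.2 h1t]

theorem accesses_base_of_mem_baseGap (hK : IsKochCurve l K) (hl : l ∈ Ioo (1 / 4 : ℝ) (1 / 2))
    {z : Plane} (hz : z ∈ baseGap l) (hzK : z ∉ K) : Accesses l K kochBase z := by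
  have hh := kochHeight_pos hl.1
  have : 0 < 1 / 2 - l := by linarith [hl.2]
  refine ⟨pt (1 / 2) 0, rfl, joinedIn_of_forall_lineMap_mem ⟨hz.1, hzK⟩ fun t ht ↦ ?_⟩
  have hcT : pt (1 / 2) 0 ∈ kochTriangle l := by
    simp only [mem_kochTriangle_iff, pt_apply_zero, pt_apply_one]
    exact ⟨le_rfl, by linarith, by linarith⟩
  refine ⟨(convex_kochTriangle l).lineMap_mem hz.1 hcT ⟨ht.1.le, ht.2⟩,
    hK.notMem_of_between_kochF_one_two hl ?_ ?_⟩ <;>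
  · have : 0 < t * (kochHeight l * (1 / 2 - l)) := mul_pos ht.1 (by positivity)
    have h1t : 0 ≤ 1 - t := sub_nonneg.2 ht.2
    simp only [plane_lineMap_apply, pt_apply_zero, pt_apply_one]
    linarith [mul_le_mul_of_nonneg_left hz.2.1 h1t, mul_le_mul_of_nonneg_left hz.2.2 h1t]

theorem accesses_legs_kochF (hK : IsKochCurve l K) (hl : l ∈ Ioo (1 / 4 : ℝ) (1 / 2)) (i : Fin 4)
    {z : Plane} (hz : Accesses l K (kochLegs l) z) :
    Accesses l K (kochLegs l) (kochF l i z) := by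
  have hsq := kochHeight_sq hl.1.le
  have : 0 < 1 - 2 * l := by linarith [hl.2]
  have : 0 < l := by linarith [hl.1]
  refine hK.accesses_kochF hl (mapsTo_reflect_kochLegs l) (fun w hw hwT ↦ ?_)
    (fun w hw hwT ↦ ?_) i z hz
  · have hF := hK.mapsTo_kochF_diff hl 0 hwT
    rcases hw with hw | hw
    · refine accesses_of_mem hF (.inl ?_)
      simp only [kochF_zero, similarity, pt_apply_zero, pt_apply_one]
      linear_combination l * hw
    · have : 0 ≤ l * (1 - 2 * l) * w 1 := mul_nonneg (by positivity) hwT.1.1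
      refine hK.accesses_legs_of_mem_leftGap hl ⟨hF.1, ?_, ?_⟩ hF.2 <;>
        simp only [kochF_zero, similarity, pt_apply_zero, pt_apply_one]
      · linear_combination -l * hw
      · linear_combination 2 * this + (1 - l) * l * hw
  · have hF := hK.mapsTo_kochF_diff hl 1 hwT
    rcases hw with hw | hw
    · have : 0 ≤ (1 - 2 * l) * (2 * w 1) := mul_nonneg (by positivity) (by linarith [hwT.1.1])
      refine hK.accesses_legs_of_mem_leftGap hl ⟨hF.1, ?_, ?_⟩ hF.2
      · linear_combination this + le_kochF_one_sub_line hl hwT.1 + (1 - 2 * l) * hw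
      · simp only [kochF_one hl.1.le, similarity, pt_apply_zero, pt_apply_one]
        linear_combination - l ^ 2 * hw - 2 * (1 - l) * w 1 * hsq
    · refine accesses_of_mem hF (.inl ?_)
      simp only [kochF_one hl.1.le, similarity, pt_apply_zero, pt_apply_one]
      linear_combination l * hw + 2 * w 1 * hsq

theorem accesses_base_kochF (hK : IsKochCurve l K) (hl : l ∈ Ioo (1 / 4 : ℝ) (1 / 2)) (i : Fin 4)
    {z : Plane} (hz : Accesses l K kochBase z) : Accesses l K kochBase (kochF l i z) := by
  have hh := kochHeight_pos hl.1
  refine hK.accesses_kochF hl mapsTo_reflect_kochBase (fun w (hw : w 1 = 0) hwT ↦ ?_)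
    (fun w (hw : w 1 = 0) hwT ↦ ?_) i z hz
  · refine accesses_of_mem (hK.mapsTo_kochF_diff hl 0 hwT) ?_
    simp [kochF_zero, similarity, kochBase, hw]
  · have hF := hK.mapsTo_kochF_diff hl 1 hwT
    have hw1 : 0 ≤ 1 - w 0 := sub_nonneg.2 (mem_Icc_of_mem_kochTriangle hl.1 hwT.1).2
    have : 0 ≤ 1 - 2 * l := by linarith [hl.2]
    have : 0 ≤ kochHeight l * (1 - 2 * l) * (1 - w 0) := by positivity
    refine hK.accesses_base_of_mem_baseGap hl ⟨hF.1, ?_, ?_⟩ hF.2 <;>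
      simp only [kochF_one hl.1.le, similarity, pt_apply_zero, pt_apply_one, hw]
    · linarith
    · linarith

theorem mem_image_kochF_of_not_accesses (hK : IsKochCurve l K) (hl : l ∈ Ioo (1 / 4 : ℝ) (1 / 2))
    {z : Plane} (hz : z ∈ kochTriangle l \ K) (hlegs : ¬ Accesses l K (kochLegs l) z)
    (hbase : ¬ Accesses l K kochBase z) : ∃ i, z ∈ kochF l i '' kochTriangle l := by
  wlog hz0 : z 0 ≤ 1 / 2 generalizing z
  · have hr {A : Set Plane} (hA : MapsTo reflect A A) (h : ¬ Accesses l K A z) :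
        ¬ Accesses l K A (reflect z) :=
      fun h' ↦ h (reflect_reflect z ▸ hK.accesses_reflect hl hA h')
    obtain ⟨i, w, hw, hwz⟩ := this (hK.reflect_mem_diff hl hz)
      (hr (mapsTo_reflect_kochLegs l) hlegs) (hr mapsTo_reflect_kochBase hbase)
      (by rw [reflect_apply_zero]; linarith)
    exact ⟨i.rev, reflect w, reflect_mem_kochTriangle hw,
      by rw [kochF_rev_reflect hl.1.le, hwz, reflect_reflect]⟩
  rcases mem_image_kochF_or_mem_gap hl.1 hz.1 hz0 with h | h | h
  · exact h
  · exact absurd (hK.accesses_legs_of_mem_leftGap hl h hz.2) hlegs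
  · exact absurd (hK.accesses_base_of_mem_baseGap hl h hz.2) hbase

theorem accesses_legs_or_accesses_base (hK : IsKochCurve l K)
    (hl : l ∈ Ioo (1 / 4 : ℝ) (1 / 2)) {z : Plane} (hz : z ∈ kochTriangle l \ K) :
    Accesses l K (kochLegs l) z ∨ Accesses l K kochBase z := by
  by_contra! h
  let B : Set Plane :=
    {z ∈ kochTriangle l \ K | ¬ Accesses l K (kochLegs l) z ∧ ¬ Accesses l K kochBase z}
  have B_subset : B ⊆ K := by
    refine hK.subset_of_subset_iUnion_image hl
      ((isBounded_kochTriangle hl.1).subset fun z hz ↦ hz.1.1) fun z ⟨hz, hlegs, hbase⟩ ↦ ?_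
    obtain ⟨i, w, hw, rfl⟩ := hK.mem_image_kochF_of_not_accesses hl hz hlegs hbase
    exact mem_iUnion.2 ⟨i, w, ⟨⟨hw, fun hwK ↦ hz.2 (hK.mapsTo_kochF i hwK)⟩,
      fun h ↦ hlegs (hK.accesses_legs_kochF hl i h),
      fun h ↦ hbase (hK.accesses_base_kochF hl i h)⟩, rfl⟩
  exact hz.2 (B_subset ⟨hz, h⟩)

end IsKochCurve

end Access

section Placement

theorem kochG_zero : kochG 0 = similarity 1 0 (pt 0 0) := by
  funext z
  refine plane_ext ?_ ?_ <;> simp [kochG, similarity]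

theorem cos_two_pi_div_three : Real.cos (2 * Real.pi / 3) = -1 / 2 := by
  rw [show 2 * Real.pi / 3 = Real.pi - Real.pi / 3 by ring, Real.cos_pi_sub, Real.cos_pi_div_three,
    neg_div]

theorem sin_two_pi_div_three : Real.sin (2 * Real.pi / 3) = √3 / 2 := by
  rw [show 2 * Real.pi / 3 = Real.pi - Real.pi / 3 by ring, Real.sin_pi_sub, Real.sin_pi_div_three]

theorem kochG_one : kochG 1 = similarity (-1 / 2) (-(√3 / 2)) (pt 1 0) := by
  funext z
  change rot (-(2 * Real.pi / 3)) z + pt 1 0 = _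
  rw [rot_add, Real.cos_neg, Real.sin_neg, cos_two_pi_div_three, sin_two_pi_div_three]

theorem kochG_two : kochG 2 = similarity (-1 / 2) (√3 / 2) (pt (1 / 2) (-(√3 / 2))) := by
  funext z
  change rot (2 * Real.pi / 3) z + pt (1 / 2) (-(√3 / 2)) = _
  rw [rot_add, cos_two_pi_div_three, sin_two_pi_div_three]

theorem exists_kochG_eq_similarity (i : Fin 3) :
    ∃ a b v, a ^ 2 + b ^ 2 = 1 ∧ kochG i = similarity a b v := by
  have h3 : √3 ^ 2 = 3 := Real.sq_sqrt (by norm_num)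
  fin_cases i
  · exact ⟨_, _, _, by ring, kochG_zero⟩
  · exact ⟨_, _, _, by linear_combination h3 / 4, kochG_one⟩
  · exact ⟨_, _, _, by linear_combination h3 / 4, kochG_two⟩

theorem isometry_kochG (i : Fin 3) : Isometry (kochG i) := by
  obtain ⟨a, b, v, hab, hG⟩ := exists_kochG_eq_similarity i
  refine Isometry.of_dist_eq fun z w ↦ ?_
  rw [hG, dist_similarity, hab, Real.sqrt_one, one_mul]

theorem kochG_lineMap (i : Fin 3) (z w : Plane) (t : ℝ) :
    kochG i (AffineMap.lineMap z w t) = AffineMap.lineMap (kochG i z) (kochG i w) t := by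
  obtain ⟨a, b, v, -, hG⟩ := exists_kochG_eq_similarity i
  rw [hG]
  refine plane_ext ?_ ?_ <;>
  · simp only [similarity, pt_apply_zero, pt_apply_one, plane_lineMap_apply]
    ring

theorem kochG_kochG (i j : Fin 3) (z : Plane) : kochG i (kochG j z) = kochG (i + j) z := by
  have h3 : √3 ^ 2 = 3 := Real.sq_sqrt (by norm_num)
  fin_cases i <;> fin_cases j <;> refine plane_ext ?_ ?_ <;>
  · simp only [Fin.zero_eta, Fin.mk_one, Fin.reduceFinMk, Fin.isValue, Fin.reduceAdd, zero_add,
      add_zero, kochG_zero, kochG_one, kochG_two, similarity, pt_apply_zero, pt_apply_one]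
    grind

theorem kochG_neg_kochG (i : Fin 3) (z : Plane) : kochG (-i) (kochG i z) = z := by
  rw [kochG_kochG, neg_add_cancel]
  rfl

theorem reflect_kochG (i : Fin 3) (z : Plane) :
    reflect (kochG i z) = kochG (-i) (reflect z) := by
  have neg_one : (-1 : Fin 3) = 2 := rfl
  have neg_two : (-2 : Fin 3) = 1 := rfl
  fin_cases i <;> refine plane_ext ?_ ?_ <;>
  · simp only [Fin.zero_eta, Fin.mk_one, Fin.reduceFinMk, Fin.isValue, neg_zero, neg_one, neg_two,
      kochG_zero, kochG_one, kochG_two, similarity, reflect_apply_zero, reflect_apply_one,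
      pt_apply_zero, pt_apply_one]
    ring

/-- The centre of the equilateral triangle on which the snowflake is built. -/
def snowflakeCenter : Plane := pt (1 / 2) (-(√3 / 6))

theorem kochG_snowflakeCenter (i : Fin 3) : kochG i snowflakeCenter = snowflakeCenter := by
  have h3 : √3 ^ 2 = 3 := Real.sq_sqrt (by norm_num)
  fin_cases i <;> refine plane_ext ?_ ?_ <;>
  · simp only [Fin.zero_eta, Fin.mk_one, Fin.reduceFinMk, Fin.isValue, kochG_zero, kochG_one,
      kochG_two, similarity, snowflakeCenter, pt_apply_zero, pt_apply_one]
    linarith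

end Placement

theorem kochG_apply_one_nonpos {l : ℝ} (hl : 1 / 4 < l) {i : Fin 3} (hi : i ≠ 0) {z : Plane}
    (hz : z ∈ kochTriangle l) : kochG i z 1 ≤ 0 := by
  obtain ⟨hz0, hz1⟩ := mem_Icc_of_mem_kochTriangle hl hz
  have h3 : 0 < √3 := by positivity
  have hz' := hz.1
  fin_cases i
  · exact absurd rfl hi
  · simp only [Fin.mk_one, Fin.isValue, kochG_one, similarity, pt_apply_zero, pt_apply_one]
    nlinarith
  · simp only [Fin.reduceFinMk, Fin.isValue, kochG_two, similarity, pt_apply_zero, pt_apply_one]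
    nlinarith

theorem eq_endpoint_of_kochG_apply_one_nonneg {l : ℝ} (hl : 1 / 4 < l) {i : Fin 3} (hi : i ≠ 0)
    {z : Plane} (hz : z ∈ kochTriangle l) (h : 0 ≤ kochG i z 1) : z = pt 0 0 ∨ z = pt 1 0 := by
  obtain ⟨hz0, hz1⟩ := mem_Icc_of_mem_kochTriangle hl hz
  have h3 : 0 < √3 := by positivity
  have hz' := hz.1
  fin_cases i
  · exact absurd rfl hi
  · left
    simp only [Fin.mk_one, Fin.isValue, kochG_one, similarity, pt_apply_zero, pt_apply_one] at h
    refine plane_ext ?_ ?_ <;> simp only [pt_apply_zero, pt_apply_one] <;> nlinarith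
  · right
    simp only [Fin.reduceFinMk, Fin.isValue, kochG_two, similarity, pt_apply_zero,
      pt_apply_one] at h
    refine plane_ext ?_ ?_ <;> simp only [pt_apply_zero, pt_apply_one] <;> nlinarith

section Boundary

variable {l : ℝ} {K : Set Plane}

theorem mem_snowflakeBoundary_iff {p : Plane} :
    p ∈ snowflakeBoundary K ↔ ∃ i, kochG i p ∈ K := by
  have exists_iff : p ∈ snowflakeBoundary K ↔ ∃ i, p ∈ kochG i '' K := by
    simp only [snowflakeBoundary, mem_union, Fin.exists_fin_succ, Fin.exists_fin_zero, or_assoc,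
      or_false]
    rfl
  rw [exists_iff]
  constructor
  · rintro ⟨i, z, hz, rfl⟩
    exact ⟨-i, by rwa [kochG_neg_kochG]⟩
  · rintro ⟨i, hi⟩
    exact ⟨-i, _, hi, kochG_neg_kochG i p⟩

theorem kochG_mem_snowflakeBoundary_iff (i : Fin 3) {p : Plane} :
    kochG i p ∈ snowflakeBoundary K ↔ p ∈ snowflakeBoundary K := by
  simp only [mem_snowflakeBoundary_iff, kochG_kochG]
  exact ((Equiv.addRight i).surjective.exists (p := fun j ↦ kochG j p ∈ K)).symm

theorem mapsTo_kochG_compl_snowflakeBoundary (i : Fin 3) :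
    MapsTo (kochG i) (snowflakeBoundary K)ᶜ (snowflakeBoundary K)ᶜ :=
  fun _ ↦ (kochG_mem_snowflakeBoundary_iff i).not.2

theorem subset_snowflakeBoundary (K : Set Plane) : K ⊆ snowflakeBoundary K :=
  fun z hz ↦ .inl (.inl ⟨z, hz, rfl⟩)

/-- The component of the complement of the snowflake boundary containing the centre. -/
def snowflakeDomain (K : Set Plane) : Set Plane :=
  connectedComponentIn (snowflakeBoundary K)ᶜ snowflakeCenter

theorem notMem_snowflakeBoundary_of_mem_snowflakeDomain {p : Plane} (hp : p ∈ snowflakeDomain K) :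
    p ∉ snowflakeBoundary K :=
  connectedComponentIn_subset _ _ hp

theorem isBounded_connectedComponentIn_of_mem_snowflakeDomain
    (hb : Bornology.IsBounded (snowflakeDomain K)) {p : Plane} (hp : p ∈ snowflakeDomain K) :
    Bornology.IsBounded (connectedComponentIn (snowflakeBoundary K)ᶜ p) := by
  rwa [← connectedComponentIn_eq hp]

theorem mem_snowflakeDomain_of_joinedIn {p : Plane}
    (h : JoinedIn (snowflakeBoundary K)ᶜ p snowflakeCenter) : p ∈ snowflakeDomain K := by
  rw [snowflakeDomain, ← connectedComponentIn_eq_of_joinedIn h]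
  exact mem_connectedComponentIn h.source_mem

namespace IsKochCurve

theorem mapsTo_reflect_compl_snowflakeBoundary (hK : IsKochCurve l K)
    (hl : l ∈ Ioo (1 / 4 : ℝ) (1 / 2)) :
    MapsTo reflect (snowflakeBoundary K)ᶜ (snowflakeBoundary K)ᶜ := by
  refine fun p hp hpr ↦ hp ?_
  obtain ⟨i, hi⟩ := mem_snowflakeBoundary_iff.1 hpr
  refine mem_snowflakeBoundary_iff.2 ⟨-i, ?_⟩
  rw [← reflect_reflect p, ← reflect_kochG]
  exact hK.reflect_mem hl hi

theorem isBounded_connectedComponentIn_reflect (hK : IsKochCurve l K)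
    (hl : l ∈ Ioo (1 / 4 : ℝ) (1 / 2)) {p : Plane} (hp : p ∉ snowflakeBoundary K)
    (hb : Bornology.IsBounded (connectedComponentIn (snowflakeBoundary K)ᶜ p)) :
    Bornology.IsBounded (connectedComponentIn (snowflakeBoundary K)ᶜ (reflect p)) := by
  have hr := hK.mapsTo_reflect_compl_snowflakeBoundary hl
  refine isBounded_connectedComponentIn_of_isometry isometry_reflect hr (hr hp) ?_
  rwa [reflect_reflect]

theorem diff_subset_compl_snowflakeBoundary (hK : IsKochCurve l K)
    (hl : l ∈ Ioo (1 / 4 : ℝ) (1 / 2)) : kochTriangle l \ K ⊆ (snowflakeBoundary K)ᶜ := by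
  rintro z ⟨hz, hzK⟩ hzS
  obtain ⟨i, hi⟩ := mem_snowflakeBoundary_iff.1 hzS
  by_cases hi0 : i = 0
  · subst hi0
    exact hzK hi
  · rcases eq_endpoint_of_kochG_apply_one_nonneg hl.1 hi0 hz (hK.subset_kochTriangle hl hi).1
      with rfl | rfl
    exacts [hzK (hK.zero_mem hl), hzK (hK.one_mem hl)]

theorem apply_one_le_of_mem_snowflakeBoundary (hK : IsKochCurve l K)
    (hl : l ∈ Ioo (1 / 4 : ℝ) (1 / 2)) {p : Plane} (hp : p ∈ snowflakeBoundary K) :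
    p 1 ≤ 2 * kochHeight l * p 0 := by
  obtain ⟨i, hi⟩ := mem_snowflakeBoundary_iff.1 hp
  rw [← kochG_neg_kochG i p]
  generalize kochG i p = w at hi
  have hwT := hK.subset_kochTriangle hl hi
  obtain ⟨hw0, hw1⟩ := mem_Icc_of_mem_kochTriangle hl.1 hwT
  obtain ⟨h0, hL, hR⟩ := hwT
  have hh := kochHeight_pos hl.1
  have neg_one : (-1 : Fin 3) = 2 := rfl
  have neg_two : (-2 : Fin 3) = 1 := rfl
  fin_cases i
  · simpa [kochG_zero, similarity] using hL
  · have : 0 ≤ 1 / 2 - 2 * kochHeight l ^ 2 := by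
      rw [kochHeight_sq hl.1.le]
      linarith [hl.2]
    have : 0 ≤ (1 - w 0) * (kochHeight l + √3 * (1 / 2 - 2 * kochHeight l ^ 2)) :=
      mul_nonneg (sub_nonneg.2 hw1) (by positivity)
    simp only [Fin.mk_one, Fin.isValue, neg_one, kochG_two, similarity, pt_apply_zero,
      pt_apply_one]
    linear_combination this + √3 * kochHeight l * hR + 1 / 2 * h0
  · have : 0 ≤ kochHeight l * (2 - w 0) := mul_nonneg hh.le (by linarith)
    have : 0 ≤ kochHeight l * √3 * w 1 := by positivity
    have : 0 ≤ √3 * w 0 := by positivity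
    simp only [Fin.reduceFinMk, Fin.isValue, neg_two, kochG_one, similarity, pt_apply_zero,
      pt_apply_one]
    linarith

theorem not_isBounded_of_left_leg_le (hK : IsKochCurve l K) (hl : l ∈ Ioo (1 / 4 : ℝ) (1 / 2))
    {p : Plane} (hp : p ∉ snowflakeBoundary K) (h : 2 * kochHeight l * p 0 ≤ p 1) :
    ¬ Bornology.IsBounded (connectedComponentIn (snowflakeBoundary K)ᶜ p) := by
  refine not_isBounded_connectedComponentIn_of_ray (v := pt 0 1)
    (fun h ↦ one_ne_zero congr($h 1)) fun t ht hmem ↦ ?_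
  have below_leg := hK.apply_one_le_of_mem_snowflakeBoundary hl hmem
  simp only [PiLp.add_apply, PiLp.smul_apply, smul_eq_mul, pt_apply_zero, pt_apply_one] at below_leg
  obtain rfl : t = 0 := by linarith
  exact hp (by simpa using hmem)

theorem not_isBounded_of_right_leg_le (hK : IsKochCurve l K) (hl : l ∈ Ioo (1 / 4 : ℝ) (1 / 2))
    {p : Plane} (hp : p ∉ snowflakeBoundary K) (h : 2 * kochHeight l * (1 - p 0) ≤ p 1) :
    ¬ Bornology.IsBounded (connectedComponentIn (snowflakeBoundary K)ᶜ p) :=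
  fun hb ↦ hK.not_isBounded_of_left_leg_le hl (hK.mapsTo_reflect_compl_snowflakeBoundary hl hp) h
    (hK.isBounded_connectedComponentIn_reflect hl hp hb)

theorem not_isBounded_of_accesses_legs (hK : IsKochCurve l K) (hl : l ∈ Ioo (1 / 4 : ℝ) (1 / 2))
    {p : Plane} (hp : Accesses l K (kochLegs l) p) :
    ¬ Bornology.IsBounded (connectedComponentIn (snowflakeBoundary K)ᶜ p) := by
  obtain ⟨w, hw, hpw⟩ := hp
  replace hpw := hpw.mono (hK.diff_subset_compl_snowflakeBoundary hl)
  rw [connectedComponentIn_eq_of_joinedIn hpw]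
  rcases hw with hw | hw
  · exact hK.not_isBounded_of_left_leg_le hl hpw.target_mem hw.ge
  · exact hK.not_isBounded_of_right_leg_le hl hpw.target_mem hw.ge

theorem joinedIn_snowflakeCenter_of_kochG_apply_one_nonpos (hK : IsKochCurve l K)
    (hl : l ∈ Ioo (1 / 4 : ℝ) (1 / 2)) {p : Plane} (hp : p ∉ snowflakeBoundary K)
    (h : ∀ i, kochG i p 1 ≤ 0) : JoinedIn (snowflakeBoundary K)ᶜ p snowflakeCenter := by
  refine joinedIn_of_forall_lineMap_mem hp fun t ht hmem ↦ ?_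
  obtain ⟨i, hi⟩ := mem_snowflakeBoundary_iff.1 hmem
  have nonneg := (hK.subset_kochTriangle hl hi).1
  rw [kochG_lineMap, kochG_snowflakeCenter, plane_lineMap_apply] at nonneg
  have : (1 - t) * kochG i p 1 ≤ 0 := mul_nonpos_of_nonneg_of_nonpos (sub_nonneg.2 ht.2) (h i)
  have : 0 < t * (√3 / 6) := mul_pos ht.1 (by positivity)
  simp only [snowflakeCenter, pt_apply_one] at nonneg
  linarith

theorem joinedIn_snowflakeCenter_of_accesses_base (hK : IsKochCurve l K)
    (hl : l ∈ Ioo (1 / 4 : ℝ) (1 / 2)) {p : Plane} (hp : Accesses l K kochBase p) :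
    JoinedIn (snowflakeBoundary K)ᶜ p snowflakeCenter := by
  obtain ⟨w, hw, hpw⟩ := hp
  have hw' : w 1 = 0 := hw
  replace hpw' := hpw.mono (hK.diff_subset_compl_snowflakeBoundary hl)
  refine hpw'.trans (hK.joinedIn_snowflakeCenter_of_kochG_apply_one_nonpos hl hpw'.target_mem
    fun i ↦ ?_)
  by_cases hi : i = 0
  · exact hi ▸ hw'.le
  · exact kochG_apply_one_nonpos hl.1 hi hpw.target_mem.1

theorem joinedIn_snowflakeCenter_of_isBounded_of_nonneg (hK : IsKochCurve l K)
    (hl : l ∈ Ioo (1 / 4 : ℝ) (1 / 2)) {p : Plane} (hp : p ∉ snowflakeBoundary K)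
    (hb : Bornology.IsBounded (connectedComponentIn (snowflakeBoundary K)ᶜ p)) (h : 0 ≤ p 1) :
    JoinedIn (snowflakeBoundary K)ᶜ p snowflakeCenter := by
  have hL : p 1 ≤ 2 * kochHeight l * p 0 :=
    (not_le.1 fun h ↦ hK.not_isBounded_of_left_leg_le hl hp h hb).le
  have hR : p 1 ≤ 2 * kochHeight l * (1 - p 0) :=
    (not_le.1 fun h ↦ hK.not_isBounded_of_right_leg_le hl hp h hb).le
  have hpT : p ∈ kochTriangle l \ K := ⟨⟨h, hL, hR⟩, fun h ↦ hp (subset_snowflakeBoundary K h)⟩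
  exact hK.joinedIn_snowflakeCenter_of_accesses_base hl <|
    (hK.accesses_legs_or_accesses_base hl hpT).resolve_left
      fun h ↦ hK.not_isBounded_of_accesses_legs hl h hb

theorem joinedIn_snowflakeCenter_of_isBounded (hK : IsKochCurve l K)
    (hl : l ∈ Ioo (1 / 4 : ℝ) (1 / 2)) {p : Plane} (hp : p ∉ snowflakeBoundary K)
    (hb : Bornology.IsBounded (connectedComponentIn (snowflakeBoundary K)ᶜ p)) :
    JoinedIn (snowflakeBoundary K)ᶜ p snowflakeCenter := by
  by_cases h : ∃ i, 0 ≤ kochG i p 1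
  · obtain ⟨i, hi⟩ := h
    have hpG : kochG i p ∉ snowflakeBoundary K := mapsTo_kochG_compl_snowflakeBoundary i hp
    have hbG : Bornology.IsBounded
        (connectedComponentIn (snowflakeBoundary K)ᶜ (kochG i p)) :=
      isBounded_connectedComponentIn_of_isometry (isometry_kochG (-i))
        (mapsTo_kochG_compl_snowflakeBoundary (-i)) hpG (by rwa [kochG_neg_kochG])
    have joined := ((hK.joinedIn_snowflakeCenter_of_isBounded_of_nonneg hl hpG hbG hi).map
      (isometry_kochG (-i)).continuous).mono
        (mapsTo_iff_image_subset.1 (mapsTo_kochG_compl_snowflakeBoundary (-i)))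
    rwa [kochG_neg_kochG, kochG_snowflakeCenter] at joined
  · push Not at h
    exact hK.joinedIn_snowflakeCenter_of_kochG_apply_one_nonpos hl hp fun i ↦ (h i).le

theorem connectedComponentIn_eq_snowflakeDomain (hK : IsKochCurve l K)
    (hl : l ∈ Ioo (1 / 4 : ℝ) (1 / 2)) {p : Plane} (hp : p ∉ snowflakeBoundary K)
    (hb : Bornology.IsBounded (connectedComponentIn (snowflakeBoundary K)ᶜ p)) :
    connectedComponentIn (snowflakeBoundary K)ᶜ p = snowflakeDomain K :=
  connectedComponentIn_eq_of_joinedIn (hK.joinedIn_snowflakeCenter_of_isBounded hl hp hb)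

theorem reflect_mem_snowflakeDomain (hK : IsKochCurve l K) (hl : l ∈ Ioo (1 / 4 : ℝ) (1 / 2))
    (hb : Bornology.IsBounded (snowflakeDomain K)) {p : Plane} (hp : p ∈ snowflakeDomain K) :
    reflect p ∈ snowflakeDomain K := by
  have hpS := notMem_snowflakeBoundary_of_mem_snowflakeDomain hp
  exact mem_snowflakeDomain_of_joinedIn <| hK.joinedIn_snowflakeCenter_of_isBounded hl
    (hK.mapsTo_reflect_compl_snowflakeBoundary hl hpS) <|
      hK.isBounded_connectedComponentIn_reflect hl hpS <|
        isBounded_connectedComponentIn_of_mem_snowflakeDomain hb hp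

theorem kochTip_mem_closure_snowflakeDomain (hK : IsKochCurve l K)
    (hl : l ∈ Ioo (1 / 4 : ℝ) (1 / 2)) :
    pt (1 / 2) (kochHeight l) ∈ closure (snowflakeDomain K) := by
  have hh := kochHeight_pos hl.1
  refine closure_mono ?_ (segment_subset_closure_openSegment
    (left_mem_segment ℝ (pt (1 / 2) (kochHeight l)) (pt (1 / 2) 0)))
  rw [openSegment_eq_image_lineMap]
  rintro _ ⟨t, ⟨ht0, ht1⟩, rfl⟩
  have hl' : 0 < 1 / 2 - l := by linarith [hl.2]
  have : 0 < t * kochHeight l := by positivity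
  have : 0 < (1 / 2 - l) * (t * kochHeight l) := by positivity
  refine mem_snowflakeDomain_of_joinedIn (hK.joinedIn_snowflakeCenter_of_accesses_base hl
    (hK.accesses_base_of_mem_baseGap hl ⟨mem_kochTriangle_iff.2 ⟨?_, ?_, ?_⟩, ?_, ?_⟩
      (hK.notMem_of_between_kochF_one_two hl ?_ ?_))) <;>
    simp only [plane_lineMap_apply, pt_apply_zero, pt_apply_one]
  · have : 0 ≤ (1 - t) * kochHeight l := mul_nonneg (by linarith) hh.le
    linarith
  all_goals linarith

end IsKochCurve

end Boundary

section Crosscuts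

variable {l : ℝ} {K : Set Plane}

/-- The similarity onto the copies of the Koch curve that shrink to its tip from the left. -/
def kochTipMap (l : ℝ) (n : ℕ) : Plane → Plane := kochF l 1 ∘ (kochF l 3)^[n]

theorem kochF_three_iterate (l : ℝ) (n : ℕ) (z : Plane) :
    (kochF l 3)^[n] z = pt (1 + l ^ n * (z 0 - 1)) (l ^ n * z 1) := by
  induction n with
  | zero => refine plane_ext ?_ ?_ <;> simp
  | succ n ih =>
    rw [Function.iterate_succ_apply', ih, kochF_three]
    refine plane_ext ?_ ?_ <;>
    · simp only [similarity, pt_apply_zero, pt_apply_one]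
      ring

theorem kochTipMap_apply (hl : 1 / 4 ≤ l) (n : ℕ) (z : Plane) :
    kochTipMap l n z = pt (1 / 2 + l ^ n * ((1 / 2 - l) * (z 0 - 1) - kochHeight l * z 1))
      (kochHeight l + l ^ n * (kochHeight l * (z 0 - 1) + (1 / 2 - l) * z 1)) := by
  rw [kochTipMap, Function.comp_apply, kochF_three_iterate, kochF_one hl]
  refine plane_ext ?_ ?_ <;>
  · simp only [similarity, pt_apply_zero, pt_apply_one]
    ring

theorem kochTipMap_one_zero (hl : 1 / 4 ≤ l) (n : ℕ) :
    kochTipMap l n (pt 1 0) = pt (1 / 2) (kochHeight l) := by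
  rw [kochTipMap_apply hl]
  refine plane_ext ?_ ?_ <;> simp

theorem isHomeomorph_kochTipMap (hl : 1 / 4 ≤ l) (n : ℕ) : IsHomeomorph (kochTipMap l n) := by
  refine (isHomeomorph_kochF hl 1).comp ?_
  induction n with
  | zero => exact .id
  | succ n ih => exact ih.comp (isHomeomorph_kochF hl 3)

theorem dist_kochTipMap (hl : 1 / 4 ≤ l) (n : ℕ) (z w : Plane) :
    dist (kochTipMap l n z) (kochTipMap l n w) = l ^ (n + 1) * dist z w := by
  rw [kochTipMap, Function.comp_apply, Function.comp_apply, dist_kochF hl, pow_succ', mul_assoc]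
  congr 1
  induction n generalizing z w with
  | zero => simp
  | succ n ih => rw [Function.iterate_succ_apply, Function.iterate_succ_apply, ih, dist_kochF hl,
      pow_succ, mul_assoc]

theorem pow_mul_apply_zero_eq_of_kochTipMap (hl : 1 / 4 ≤ l) (n : ℕ) (z : Plane) :
    l ^ (n + 2) * z 0 = l ^ (n + 2) + (1 / 2 - l) * (kochTipMap l n z 0 - 1 / 2) +
      kochHeight l * (kochTipMap l n z 1 - kochHeight l) := by
  rw [kochTipMap_apply hl, pt_apply_zero, pt_apply_one]
  linear_combination -(l ^ n * (z 0 - 1)) * kochHeight_sq hl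

theorem below_right_leg_of_kochTipMap (hl : 1 / 4 < l) {n : ℕ} {z : Plane}
    (h : kochTipMap l n z 1 ≤ 2 * kochHeight l * kochTipMap l n z 0) :
    z 1 ≤ 2 * kochHeight l * (1 - z 0) := by
  rw [kochTipMap_apply hl.le, pt_apply_zero, pt_apply_one] at h
  have : 0 < l := by linarith
  have : 0 ≤ l ^ n * l * (2 * kochHeight l * (1 - z 0) - z 1) := by
    linear_combination h - 2 * l ^ n * z 1 * kochHeight_sq hl.le
  exact sub_nonneg.1 (nonneg_of_mul_nonneg_right this (by positivity))

/-- The region right of the vertical axis and below the left leg of `kochTriangle`. -/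
def kochSector (l : ℝ) : Set Plane := {z | 0 < z 0 ∧ z 1 < 2 * kochHeight l * z 0}

theorem isOpen_kochSector (l : ℝ) : IsOpen (kochSector l) := by
  simp only [kochSector, ofPred_and]
  exact (isOpen_lt (by fun_prop) (by fun_prop)).inter (isOpen_lt (by fun_prop) (by fun_prop))

theorem frontier_kochSector_subset (l : ℝ) :
    frontier (kochSector l) ⊆ {z | z 0 = 0 ∧ z 1 ≤ 0} ∪
      {z | 0 ≤ z 0 ∧ z 1 = 2 * kochHeight l * z 0} := by
  rw [(isOpen_kochSector l).frontier_eq]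
  rintro z ⟨hz, hzs⟩
  have hclosed : IsClosed {z : Plane | 0 ≤ z 0 ∧ z 1 ≤ 2 * kochHeight l * z 0} := by
    simp only [ofPred_and]
    exact (isClosed_le (by fun_prop) (by fun_prop)).inter (isClosed_le (by fun_prop) (by fun_prop))
  obtain ⟨h0, h1⟩ := closure_minimal (t := {z | 0 ≤ z 0 ∧ z 1 ≤ 2 * kochHeight l * z 0})
    (fun w hw ↦ ⟨hw.1.le, hw.2.le⟩) hclosed hz
  rcases eq_or_lt_of_le h0 with h | h
  · exact .inl ⟨h.symm, by simpa [← h] using h1⟩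
  · exact .inr ⟨h0, h1.eq_of_not_lt fun h1 ↦ hzs ⟨h, h1⟩⟩

/-- The folding of the plane onto the half-plane `{z | z 0 ≤ 1 / 2}` along the axis of
`reflect`. -/
def foldLeft (p : Plane) : Plane := if p 0 ≤ 1 / 2 then p else reflect p

theorem foldLeft_eq_or_eq_reflect (p : Plane) : foldLeft p = p ∨ foldLeft p = reflect p :=
  ite_eq_or_eq _ _ _

theorem foldLeft_apply_zero_le_half (p : Plane) : foldLeft p 0 ≤ 1 / 2 := by
  rw [foldLeft]
  split_ifs with h
  · exact h
  · rw [reflect_apply_zero]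
    linarith

theorem continuous_foldLeft : Continuous foldLeft :=
  continuous_id.if_le isometry_reflect.continuous (by fun_prop) continuous_const fun z hz ↦
    plane_ext (by rw [reflect_apply_zero, id, hz]; norm_num) rfl

/-- The neighbourhoods of the tip whose boundaries are the crosscuts of the snowflake. -/
def kochTipNhd (l : ℝ) (n : ℕ) : Set Plane := foldLeft ⁻¹' (kochTipMap l n '' kochSector l)

theorem kochTipNhd_mem_nhds (hl : 1 / 4 < l) (n : ℕ) :
    kochTipNhd l n ∈ 𝓝 (pt (1 / 2) (kochHeight l)) := by
  refine (((isHomeomorph_kochTipMap hl.le n).isOpenMap _ (isOpen_kochSector l)).preimage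
    continuous_foldLeft).mem_nhds ⟨pt 1 0, ⟨?_, ?_⟩, ?_⟩
  · simp
  · simpa using kochHeight_pos hl
  · rw [kochTipMap_one_zero hl.le]
    exact (if_pos (le_refl (1 / 2 : ℝ))).symm

theorem exists_foldLeft_eq_kochTipMap (hl : 1 / 4 ≤ l) {n : ℕ} {p : Plane}
    (hp : p ∈ frontier (kochTipNhd l n)) :
    ∃ z ∈ frontier (kochSector l), kochTipMap l n z = foldLeft p := by
  have := continuous_foldLeft.frontier_preimage_subset _ hp
  exact ((isHomeomorph_kochTipMap hl n).homeomorph.image_frontier _).ge this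

theorem dist_kochTipMap_le (hl : l ∈ Ioo (1 / 4 : ℝ) (1 / 2)) {n : ℕ} {z : Plane} (hz0 : z 0 = 0)
    (hz1 : z 1 ≤ 0) (hq : kochTipMap l n z 0 ≤ 1 / 2) :
    dist (kochTipMap l n z) (kochTipMap l n (pt 0 0)) ≤
      (1 / 2 - l) / l * dist (kochTipMap l n z) (pt (1 / 2) (kochHeight l)) := by
  have hl0 : 0 < l := by linarith [hl.1]
  have hl2 : 0 < 1 / 2 - l := by linarith [hl.2]
  have hh := kochHeight_pos hl.1
  have bound : kochHeight l * -z 1 ≤ 1 / 2 - l := by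
    rw [kochTipMap_apply hl.1.le, pt_apply_zero, hz0] at hq
    have : 0 ≤ l ^ n * (1 / 2 - l - kochHeight l * -z 1) := by linarith
    exact sub_nonneg.1 (nonneg_of_mul_nonneg_right this (by positivity))
  rw [← kochTipMap_one_zero hl.1.le n, dist_kochTipMap hl.1.le, dist_kochTipMap hl.1.le,
    mul_left_comm]
  refine mul_le_mul_of_nonneg_left ?_ (by positivity)
  rw [div_mul_eq_mul_div, le_div_iff₀ hl0, mul_comm, plane_dist_eq_sqrt, plane_dist_eq_sqrt]
  simp only [hz0, pt_apply_zero, pt_apply_one]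
  rw [← sq_le_sq₀ (by positivity) (by positivity), mul_pow, mul_pow, Real.sq_sqrt (by positivity),
    Real.sq_sqrt (by positivity)]
  have bound_sq : (kochHeight l * -z 1) ^ 2 ≤ (1 / 2 - l) ^ 2 :=
    pow_le_pow_left₀ (mul_nonneg hh.le (neg_nonneg.2 hz1)) bound 2
  linear_combination bound_sq - z 1 ^ 2 * kochHeight_sq hl.1.le

namespace IsKochCurve

theorem kochTipMap_mem (hK : IsKochCurve l K) (n : ℕ) {z : Plane} (hz : z ∈ K) :
    kochTipMap l n z ∈ K :=
  hK.mapsTo_kochF 1 ((hK.mapsTo_kochF 3).iterate n hz)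

theorem accesses_legs_kochTipMap (hK : IsKochCurve l K) (hl : l ∈ Ioo (1 / 4 : ℝ) (1 / 2))
    (n : ℕ) {z : Plane} (hz : Accesses l K (kochLegs l) z) :
    Accesses l K (kochLegs l) (kochTipMap l n z) := by
  refine hK.accesses_legs_kochF hl 1 ?_
  induction n generalizing z with
  | zero => exact hz
  | succ _ ih => exact ih (hK.accesses_legs_kochF hl 3 hz)

theorem kochTipMap_notMem_snowflakeDomain (hK : IsKochCurve l K)
    (hl : l ∈ Ioo (1 / 4 : ℝ) (1 / 2)) (hb : Bornology.IsBounded (snowflakeDomain K)) {n : ℕ}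
    {z : Plane} (hz0 : 0 ≤ z 0) (hz1 : z 1 = 2 * kochHeight l * z 0) :
    kochTipMap l n z ∉ snowflakeDomain K := by
  intro hq
  have hqS := notMem_snowflakeBoundary_of_mem_snowflakeDomain hq
  have bounded := isBounded_connectedComponentIn_of_mem_snowflakeDomain hb hq
  have below := (not_le.1 fun h ↦ hK.not_isBounded_of_left_leg_le hl hqS h bounded).le
  have hzT : z ∈ kochTriangle l :=
    ⟨hz1 ▸ mul_nonneg (mul_pos two_pos (kochHeight_pos hl.1)).le hz0, hz1.le,
      below_right_leg_of_kochTipMap hl.1 below⟩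
  have hzK : z ∉ K := fun hz ↦ hqS (subset_snowflakeBoundary K (hK.kochTipMap_mem n hz))
  exact hK.not_isBounded_of_accesses_legs hl
    (hK.accesses_legs_kochTipMap hl n (accesses_of_mem ⟨hzT, hzK⟩ (.inl hz1))) bounded

theorem infDist_frontier_snowflakeDomain_le (hK : IsKochCurve l K)
    (hl : l ∈ Ioo (1 / 4 : ℝ) (1 / 2)) (hb : Bornology.IsBounded (snowflakeDomain K)) {n : ℕ}
    {p : Plane} (hp : p ∈ snowflakeDomain K) (hpA : p ∈ frontier (kochTipNhd l n)) :
    infDist p (frontier (snowflakeDomain K)) ≤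
      (1 / 2 - l) / l * dist p (pt (1 / 2) (kochHeight l)) := by
  obtain ⟨z, hz, hzp⟩ := exists_foldLeft_eq_kochTipMap hl.1.le hpA
  set V := kochTipMap l n (pt 0 0)
  have hVS : V ∉ (snowflakeBoundary K)ᶜ :=
    not_not.2 (subset_snowflakeBoundary K (hK.kochTipMap_mem n (hK.zero_mem hl)))
  have dist_le : foldLeft p ∈ snowflakeDomain K → dist (foldLeft p) V ≤
      (1 / 2 - l) / l * dist (foldLeft p) (pt (1 / 2) (kochHeight l)) := by
    have hq0 := foldLeft_apply_zero_le_half p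
    rw [← hzp] at hq0 ⊢
    rcases frontier_kochSector_subset l hz with ⟨hz0, hz1⟩ | ⟨hz0, hz1⟩
    · exact fun _ ↦ dist_kochTipMap_le hl hz0 hz1 hq0
    · exact fun hq ↦ (hK.kochTipMap_notMem_snowflakeDomain hl hb hz0 hz1 hq).elim
  rcases foldLeft_eq_or_eq_reflect p with h | h <;> rw [h] at dist_le
  · exact (infDist_frontier_le_dist hp fun hV ↦
      hVS (notMem_snowflakeBoundary_of_mem_snowflakeDomain hV)).trans (dist_le hp)
  · have hVr : reflect V ∉ snowflakeDomain K := fun hV ↦ hVS <| by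
      simpa using hK.mapsTo_reflect_compl_snowflakeBoundary hl
        (notMem_snowflakeBoundary_of_mem_snowflakeDomain hV)
    refine (infDist_frontier_le_dist hp hVr).trans ?_
    rw [← isometry_reflect.dist_eq p (pt (1 / 2) _), ← isometry_reflect.dist_eq p (reflect V),
      reflect_reflect, reflect_pt, sub_half]
    exact dist_le (hK.reflect_mem_snowflakeDomain hl hb hp)

theorem exists_notMem_kochTipNhd (hK : IsKochCurve l K) (hl : l ∈ Ioo (1 / 4 : ℝ) (1 / 2))
    (hb : Bornology.IsBounded (snowflakeDomain K)) {x : Plane} (hx : x ∈ snowflakeDomain K) :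
    ∃ n, x ∉ kochTipNhd l n := by
  have hl0 : 0 < l := by linarith [hl.1]
  have hh := kochHeight_pos hl.1
  have hq : foldLeft x ∈ snowflakeDomain K := by
    rcases foldLeft_eq_or_eq_reflect x with h | h <;> rw [h]
    exacts [hx, hK.reflect_mem_snowflakeDomain hl hb hx]
  have hq0 := foldLeft_apply_zero_le_half x
  have below : foldLeft x 1 < 2 * kochHeight l * foldLeft x 0 := not_le.1 fun h ↦
    hK.not_isBounded_of_left_leg_le hl (notMem_snowflakeBoundary_of_mem_snowflakeDomain hq) h
      (isBounded_connectedComponentIn_of_mem_snowflakeDomain hb hq)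
  have hx0 : (1 / 2 - l) * (foldLeft x 0 - 1 / 2) ≤ 0 :=
    mul_nonpos_of_nonneg_of_nonpos (by linarith [hl.2]) (by linarith)
  have hx1 : kochHeight l * (foldLeft x 1 - kochHeight l) < 0 := by
    have : kochHeight l * foldLeft x 0 ≤ kochHeight l * (1 / 2) :=
      mul_le_mul_of_nonneg_left hq0 hh.le
    exact mul_neg_of_pos_of_neg hh (by linarith)
  obtain ⟨n, hn⟩ := exists_pow_lt_of_lt_one (neg_pos.2 (add_neg_of_nonpos_of_neg hx0 hx1))
    (show l < 1 by linarith [hl.2])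
  refine ⟨n, fun ⟨z, ⟨hz, _⟩, hzx⟩ ↦ ?_⟩
  have pow_le : l ^ (n + 2) ≤ l ^ n :=
    pow_le_pow_of_le_one hl0.le (by linarith [hl.2]) (by lia)
  have pos : 0 < l ^ (n + 2) * z 0 := by positivity
  rw [pow_mul_apply_zero_eq_of_kochTipMap hl.1.le, hzx] at pos
  linarith

end IsKochCurve

end Crosscuts

theorem snowflake_not_johnDomain_general (l : ℝ) (hl1 : 1 / 4 < l) (hl2 : l < 1 / 2)
    (K : Set Plane) (hne : K.Nonempty) (hcomp : IsCompact K)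
    (hK : K = kochF l 0 '' K ∪ kochF l 1 '' K ∪ kochF l 2 '' K ∪ kochF l 3 '' K)
    (Ω : Set Plane) (hbdd : Bornology.IsBounded Ω)
    (hΩ : ∃ x ∈ (snowflakeBoundary K)ᶜ, Ω = connectedComponentIn (snowflakeBoundary K)ᶜ x)
    (J : ℝ) (hJ : (1 / 2 - l) / l < J) :
    ¬ IsJohnDomain Ω J := by
  have hl : l ∈ Ioo (1 / 4 : ℝ) (1 / 2) := ⟨hl1, hl2⟩
  have hKoch := IsKochCurve.of_eq_union hne hcomp hK
  obtain ⟨x, hx, rfl⟩ := hΩ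
  have domain_eq := hKoch.connectedComponentIn_eq_snowflakeDomain hl hx hbdd
  rw [domain_eq] at hbdd ⊢
  refine not_isJohnDomain_of_crosscuts (hKoch.kochTip_mem_closure_snowflakeDomain hl)
    (div_nonneg (by linarith) (by linarith)) hJ fun x₀ hx₀ ↦ ?_
  obtain ⟨n, hn⟩ := hKoch.exists_notMem_kochTipNhd hl hbdd hx₀
  exact ⟨kochTipNhd l n, kochTipNhd_mem_nhds hl1 n, hn, fun p ⟨hp, hpA⟩ ↦
    hKoch.infDist_frontier_snowflakeDomain_le hl hbdd hp hpA⟩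

/-- **Optimality of the John constant for the snowflake domain.** The bounded connected
component `Ω` of the complement of the snowflake boundary built from the von Koch curve
with parameter `l ∈ [1/3,1/2)` is not a `J`-John domain for any `J > (1/2-l)/l`. -/
theorem snowflake_not_johnDomain (l : ℝ) (hl1 : 1/3 ≤ l) (hl2 : l < 1/2)
    (K : Set Plane) (hne : K.Nonempty) (hcomp : IsCompact K)
    (hK : K = kochF l 0 '' K ∪ kochF l 1 '' K ∪ kochF l 2 '' K ∪ kochF l 3 '' K)
    (Ω : Set Plane) (hbdd : Bornology.IsBounded Ω)
    (hΩ : ∃ x ∈ (snowflakeBoundary K)ᶜ, Ω = connectedComponentIn (snowflakeBoundary K)ᶜ x)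
    (J : ℝ) (hJ : (1/2 - l) / l < J) :
    ¬ IsJohnDomain Ω J :=
  snowflake_not_johnDomain_general l (by linarith) hl2 K hne hcomp hK Ω hbdd hΩ J hJ
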